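/- arXiv:1103.3581 — 4 statements merged into one kernel-verified Lean document; each statement's English description precedes it below -/
import Mathlib

section
/- Let r be an odd prime with r ≠ 5. Let G be a finite group with a normal subgroup R whose cardinality is a power of r, such that the quotient group G ⧸ R is isomorphic to the alternating group on 5 letters. Suppose there is an element g ∈ G of order 5 that acts fixed point freely on R by conjugation, i.e. for every x ∈ R, if g * x * g⁻¹ = x then x = 1. Then R is nilpotent of nilpotency class at most two. -/
namespace FPF

abbrev A5 := alternatingGroup (Fin 5)
def c : A5 := ⟨finRotate 5, Equiv.Perm.mem_alternatingGroup.2 (by decide)⟩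
def a : A5 := ⟨Equiv.swap 1 4 * Equiv.swap 2 3, Equiv.Perm.mem_alternatingGroup.2 (by decide)⟩
def b : A5 := ⟨Equiv.swap 1 2 * Equiv.swap 3 4, Equiv.Perm.mem_alternatingGroup.2 (by decide)⟩
def t : A5 := ⟨Equiv.swap 1 2 * Equiv.swap 2 3, Equiv.Perm.mem_alternatingGroup.2 (by decide)⟩
def V : Fin 4 → A5 := ![1, a, b, a * b]

theorem dcoset : ∀ i : Fin 5, i ≠ 0 →
    ∃ v v' : Fin 4, V v * (t * c ^ (i:ℕ)) = (c ^ (i:ℕ) * t⁻¹) * V v' := by decide +kernel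
theorem stab : ∀ s : A5, s.1 0 = 0 → ∃ v : Fin 4, ∃ k : Fin 3, s = V v * t ^ (k:ℕ) := by
  decide +kernel
theorem trans2 : ∀ p q : Fin 5, p ≠ q → ∃ h : A5, h.1 0 = p ∧ h.1 1 = q := by decide +kernel
theorem three_cycle : ∀ l : Fin 5, l ≠ 0 → l ≠ 1 → ∃ h : A5, h.1 0 = 0 ∧ h.1 1 = 1 ∧ h.1 2 = l := by
  decide +kernel
theorem c_pow_zero : ∀ p : Fin 5, (c ^ (p:ℕ)).1 0 = p := by decide +kernel

section
variable {X : Type*} [AddCommGroup X] (ρ : Representation ℤ A5 X)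

/-- the sum over the four-group -/
def N0 : X →ₗ[ℤ] X := 1 + ρ a + ρ b + ρ (a * b)

/-- fixed by the point stabilizer -/
def U (u : X) : Prop := ∀ h : A5, h.1 0 = 0 → ρ h u = u

/-- the norm of the five-cycle kills all translates -/
def NZ (x : X) : Prop := ∀ h : A5, ∑ i : Fin 5, ρ (c ^ (i:ℕ) * h) x = 0

def fam (u : X) (p : Fin 5) : X := ρ (c ^ (p:ℕ)) u

def kap (p : Fin 5) : X →ₗ[ℤ] X := N0 ρ ∘ₗ ρ (c ^ (p:ℕ))⁻¹

variable {ρ}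

theorem rmul (g h : A5) (x : X) : ρ g (ρ h x) = ρ (g * h) x := by
  rw [map_mul]; rfl

theorem rone (x : X) : ρ 1 x = x := by simp

theorem NZ.translate {x : X} (hx : NZ ρ x) (h : A5) : NZ ρ (ρ h x) := by
  intro k
  simp only [rmul, mul_assoc]
  exact hx (k * h)

theorem NZ.add {x y : X} (hx : NZ ρ x) (hy : NZ ρ y) : NZ ρ (x + y) := by
  intro k
  simp only [map_add, Finset.sum_add_distrib]
  rw [hx k, hy k, add_zero]

theorem NZ.neg {x : X} (hx : NZ ρ x) : NZ ρ (-x) := by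
  intro k
  simp only [map_neg, Finset.sum_neg_distrib]
  rw [hx k, neg_zero]

theorem NZ.sub {x y : X} (hx : NZ ρ x) (hy : NZ ρ y) : NZ ρ (x - y) := by
  rw [sub_eq_add_neg]; exact hx.add hy.neg

theorem N0_apply (x : X) : N0 ρ x = x + ρ a x + ρ b x + ρ (a * b) x := rfl

theorem NZ.N0 {x : X} (hx : NZ ρ x) : NZ ρ (N0 ρ x) := by
  rw [N0_apply]
  exact ((hx.add (hx.translate _)).add (hx.translate _)).add (hx.translate _)

theorem NZ.kap {x : X} (hx : NZ ρ x) (p) : NZ ρ (kap ρ p x) := (hx.translate _).N0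

theorem N0_V (v : Fin 4) (x : X) : N0 ρ (ρ (V v) x) = N0 ρ x := by
  have h1 : a * a = 1 := by decide +kernel
  have h2 : b * a = a * b := by decide +kernel
  have h3 : b * b = 1 := by decide +kernel
  have h4 : a * b * a = b := by decide +kernel
  have h5 : a * (a * b) = b := by decide +kernel
  have h6 : b * (a * b) = a := by decide +kernel
  have h7 : (a * b) * (a * b) = 1 := by decide +kernel
  have h8 : a * b * b = a := by decide +kernel
  fin_cases v <;> simp only [N0_apply, V, Fin.reduceFinMk, Matrix.cons_val, rmul, h1, h2, h3, h4, h5, h6, h7, h8, rone] <;> abel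

theorem V_N0 (v : Fin 4) (x : X) : ρ (V v) (N0 ρ x) = N0 ρ x := by
  have h1 : a * a = 1 := by decide +kernel
  have h2 : b * a = a * b := by decide +kernel
  have h3 : b * b = 1 := by decide +kernel
  have h4 : a * b * a = b := by decide +kernel
  have h5 : a * (a * b) = b := by decide +kernel
  have h6 : b * (a * b) = a := by decide +kernel
  have h7 : (a * b) * (a * b) = 1 := by decide +kernel
  have h8 : a * b * b = a := by decide +kernel
  fin_cases v <;> simp only [N0_apply, map_add, V, Fin.reduceFinMk, Matrix.cons_val, rmul, h1, h2, h3, h4, h5, h6, h7, h8, rone] <;> abel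

theorem N0_of_fixed {u : X} (hu : ∀ v, ρ (V v) u = u) : N0 ρ u = (4:ℕ) • u := by
  have h1 : ρ a u = u := hu 1
  have h2 : ρ b u = u := hu 2
  have h3 : ρ (a * b) u = u := hu 3
  rw [N0_apply, h1, h2, h3]; abel

theorem t_N0 (x : X) : N0 ρ (ρ t x) = ρ t (N0 ρ x) := by
  have h1 : a * t = t * b := by decide +kernel
  have h2 : b * t = t * (a * b) := by decide +kernel
  have h3 : a * b * t = t * a := by decide +kernel
  simp only [N0_apply, map_add, rmul, h1, h2, h3]; abel

theorem t_fix (h2 : ∀ x : X, (2:ℕ) • x = 0 → x = 0) {x : X} (hx : NZ ρ x) :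
    ρ t (N0 ρ x) = N0 ρ x := by
  set u := N0 ρ x with hu
  have hun : NZ ρ u := hx.N0
  have huV : ∀ v, ρ (V v) u = u := fun v => V_N0 v x
  have key : ∀ i : Fin 5, i ≠ 0 →
      N0 ρ (ρ (t * c ^ (i:ℕ)) u) = N0 ρ (ρ (c ^ (i:ℕ) * t⁻¹) u) := by
    intro i hi
    obtain ⟨v, v', h⟩ := dcoset i hi
    rw [← N0_V v, rmul, h, ← rmul, huV]
  have s1 : ∑ i : Fin 5, N0 ρ (ρ (t * c ^ (i:ℕ)) u) = 0 := by
    have := hun 1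
    simp only [mul_one] at this
    simp only [← rmul]
    rw [← map_sum, ← map_sum, this, map_zero, map_zero]
  have s2 : ∑ i : Fin 5, N0 ρ (ρ (c ^ (i:ℕ) * t⁻¹) u) = 0 := by
    rw [← map_sum, hun t⁻¹, map_zero]
  have k1 := key 1 (by decide)
  have k2 := key 2 (by decide)
  have k3 := key 3 (by decide)
  have k4 := key 4 (by decide)
  rw [Fin.sum_univ_five, k1, k2, k3, k4] at s1
  rw [Fin.sum_univ_five] at s2
  have e : N0 ρ (ρ (t * c ^ ((0 : Fin 5):ℕ)) u) = N0 ρ (ρ (c ^ ((0 : Fin 5):ℕ) * t⁻¹) u) := by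
    rw [← s2] at s1
    simpa using s1
  simp only [Fin.val_zero, pow_zero, mul_one, one_mul] at e
  have tt : t⁻¹ = t * t := by decide +kernel
  rw [tt, ← rmul, t_N0, t_N0, t_N0, N0_of_fixed huV] at e
  have e2 : ρ t u = ρ t (ρ t u) := by
    rw [← sub_eq_zero]
    apply h2; apply h2
    rw [← sub_eq_zero] at e
    simp only [map_nsmul] at e
    rw [← e]; module
  have e3 := congrArg (ρ t⁻¹) e2
  simp only [rmul] at e3
  rw [inv_mul_cancel, ← mul_assoc, inv_mul_cancel, rone, one_mul] at e3
  exact e3.symm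

theorem U_N0 (h2 : ∀ x : X, (2:ℕ) • x = 0 → x = 0) {x : X} (hx : NZ ρ x) : U ρ (N0 ρ x) := by
  intro h hh
  obtain ⟨v, k, rfl⟩ := stab h hh
  have : ∀ k : ℕ, ρ (t ^ k) (N0 ρ x) = N0 ρ x := by
    intro k
    induction k with
    | zero => simp
    | succ n ih => rw [pow_succ, ← rmul, t_fix h2 hx, ih]
  rw [← rmul, this, V_N0]

theorem N0_stab (h2 : ∀ x : X, (2:ℕ) • x = 0 → x = 0) {x : X} (hx : NZ ρ x) (h : A5)
    (hh : h.1 0 = 0) : N0 ρ (ρ h x) = N0 ρ x := by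
  obtain ⟨v, k, rfl⟩ := stab h hh
  have : ∀ k : ℕ, N0 ρ (ρ (t ^ k) x) = N0 ρ x := by
    intro k
    induction k with
    | zero => simp
    | succ n ih => rw [pow_succ', ← rmul, t_N0, ih, t_fix h2 hx]
  rw [← rmul, N0_V, this]

theorem U_kap (h2 : ∀ x : X, (2:ℕ) • x = 0 → x = 0) {x : X} (hx : NZ ρ x) (p) :
    U ρ (kap ρ p x) := U_N0 h2 (hx.translate _)

theorem kap_equiv (h2 : ∀ x : X, (2:ℕ) • x = 0 → x = 0) {x : X} (hx : NZ ρ x) (h : A5)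
    (p : Fin 5) : kap ρ (h.1 p) (ρ h x) = kap ρ p x := by
  have hs : ((c ^ ((h.1 p : Fin 5) : ℕ))⁻¹ * h * c ^ (p:ℕ)).1 0 = 0 := by
    change (c ^ ((h.1 p : Fin 5) : ℕ)).1⁻¹ (h.1 ((c ^ (p:ℕ)).1 0)) = 0
    rw [c_pow_zero, Equiv.Perm.inv_eq_iff_eq, c_pow_zero]
  have := N0_stab h2 (hx.translate ((c ^ (p:ℕ))⁻¹)) _ hs
  rw [rmul] at this
  simp only [kap, LinearMap.comp_apply]
  rw [← this, rmul]
  congr 3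
  group

theorem fam_equiv {u : X} (hu : U ρ u) (h : A5) (p : Fin 5) :
    ρ h (fam ρ u p) = fam ρ u (h.1 p) := by
  have hs : ((c ^ ((h.1 p : Fin 5) : ℕ))⁻¹ * h * c ^ (p:ℕ)).1 0 = 0 := by
    change (c ^ ((h.1 p : Fin 5) : ℕ)).1⁻¹ (h.1 ((c ^ (p:ℕ)).1 0)) = 0
    rw [c_pow_zero, Equiv.Perm.inv_eq_iff_eq, c_pow_zero]
  have := congrArg (ρ (c ^ ((h.1 p : Fin 5) : ℕ))) (hu _ hs)
  rw [rmul] at this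
  rw [fam, fam, ← this, rmul]
  congr 2
  group

theorem sum_fam {u : X} (hu : NZ ρ u) : ∑ p, fam ρ u p = 0 := by
  simpa [fam] using hu 1

theorem NZ.fam {u : X} (hu : NZ ρ u) (p) : NZ ρ (fam ρ u p) := hu.translate _

theorem fam_add (u v : X) (p) : fam ρ (u + v) p = fam ρ u p + fam ρ v p := map_add _ _ _
theorem fam_sub (u v : X) (p) : fam ρ (u - v) p = fam ρ u p - fam ρ v p := map_sub _ _ _

theorem U.add {u v : X} (hu : U ρ u) (hv : U ρ v) : U ρ (u + v) := by
  intro h hh; rw [map_add, hu h hh, hv h hh]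
theorem U.sub {u v : X} (hu : U ρ u) (hv : U ρ v) : U ρ (u - v) := by
  intro h hh; rw [map_sub, hu h hh, hv h hh]

theorem sum_kap {x : X} (hx : NZ ρ x) : ∑ p, kap ρ p x = 0 := by
  have h0 := hx 1
  simp only [kap, LinearMap.comp_apply, mul_one] at h0 ⊢
  rw [← map_sum, ← map_zero (N0 ρ), ← h0]
  congr 1
  simp only [Fin.sum_univ_five]
  have e1 : (c ^ ((1 : Fin 5):ℕ))⁻¹ = c ^ ((4 : Fin 5):ℕ) := by decide +kernel
  have e2 : (c ^ ((2 : Fin 5):ℕ))⁻¹ = c ^ ((3 : Fin 5):ℕ) := by decide +kernel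
  have e3 : (c ^ ((3 : Fin 5):ℕ))⁻¹ = c ^ ((2 : Fin 5):ℕ) := by decide +kernel
  have e4 : (c ^ ((4 : Fin 5):ℕ))⁻¹ = c ^ ((1 : Fin 5):ℕ) := by decide +kernel
  have e0 : (c ^ ((0 : Fin 5):ℕ))⁻¹ = c ^ ((0 : Fin 5):ℕ) := by decide +kernel
  rw [e0, e1, e2, e3, e4]; abel

/-- `N0` on a family -/
theorem N0_fam {u : X} (hu : U ρ u) (hn : NZ ρ u) (q : Fin 5) :
    N0 ρ (fam ρ u q) = if q = 0 then (4:ℕ) • u else -u := by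
  have hs := sum_fam hn
  rw [Fin.sum_univ_five] at hs
  have h0 : fam ρ u 0 = u := by simp [fam]
  rw [N0_apply, fam_equiv hu, fam_equiv hu, fam_equiv hu]
  rw [h0] at hs
  have hs' : -u = fam ρ u 1 + fam ρ u 2 + fam ρ u 3 + fam ρ u 4 := by
    rw [neg_eq_iff_add_eq_zero, ← hs]; abel
  have a0 : a.1 0 = 0 := by decide +kernel
  have a1 : a.1 1 = 4 := by decide +kernel
  have a2 : a.1 2 = 3 := by decide +kernel
  have a3 : a.1 3 = 2 := by decide +kernel
  have a4 : a.1 4 = 1 := by decide +kernel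
  have b0 : b.1 0 = 0 := by decide +kernel
  have b1 : b.1 1 = 2 := by decide +kernel
  have b2 : b.1 2 = 1 := by decide +kernel
  have b3 : b.1 3 = 4 := by decide +kernel
  have b4 : b.1 4 = 3 := by decide +kernel
  have c0 : (a * b).1 0 = 0 := by decide +kernel
  have c1 : (a * b).1 1 = 3 := by decide +kernel
  have c2 : (a * b).1 2 = 4 := by decide +kernel
  have c3 : (a * b).1 3 = 1 := by decide +kernel
  have c4 : (a * b).1 4 = 2 := by decide +kernel
  rcases (by decide +revert : q = 0 ∨ q = 1 ∨ q = 2 ∨ q = 3 ∨ q = 4) with h | h | h | h | h <;> subst h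
  · rw [a0, b0, c0, h0, if_pos rfl]; abel
  · rw [a1, b1, c1, if_neg (by decide), hs']; abel
  · rw [a2, b2, c2, if_neg (by decide), hs']; abel
  · rw [a3, b3, c3, if_neg (by decide), hs']; abel
  · rw [a4, b4, c4, if_neg (by decide), hs']; abel

theorem kap_fam {u : X} (hu : U ρ u) (hn : NZ ρ u) (p q : Fin 5) :
    kap ρ p (fam ρ u q) = if p = q then (4:ℕ) • u else -u := by
  simp only [kap, LinearMap.comp_apply]
  rw [fam_equiv hu, N0_fam hu hn]
  have : ((c ^ (p:ℕ))⁻¹ : A5).1 q = 0 ↔ p = q := by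
    change (c ^ (p:ℕ)).1⁻¹ q = 0 ↔ _
    rw [Equiv.Perm.inv_eq_iff_eq, c_pow_zero]; exact eq_comm
  simp only [this]

theorem c_add : ∀ p m : Fin 5, c ^ (p:ℕ) * c ^ (m:ℕ) = c ^ ((p + m : Fin 5):ℕ) := by decide +kernel

def J (ρ : Representation ℤ A5 X) (x : X) (y : A5) : X :=
  ∑ p : Fin 5, ρ (c ^ (p:ℕ) * y * (c ^ (p:ℕ))⁻¹) x

theorem J_conj (x : X) (y : A5) (m : Fin 5) :
    J ρ x (c ^ (m:ℕ) * y * (c ^ (m:ℕ))⁻¹) = J ρ x y := by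
  unfold J
  refine Fintype.sum_equiv (Equiv.addRight m) _ _ ?_
  intro p
  simp only [Equiv.coe_addRight, ← c_add, mul_inv_rev, mul_assoc]

theorem J_a {x : X} (hx : NZ ρ x) : J ρ x a = 0 := by
  rw [← hx a, J]
  have : ∀ p : Fin 5, c ^ (p:ℕ) * a * (c ^ (p:ℕ))⁻¹ = c ^ ((2 * p : Fin 5):ℕ) * a := by
    decide +kernel
  simp only [this, Fin.sum_univ_five]
  have e0 : (2 * 0 : Fin 5) = 0 := by decide
  have e1 : (2 * 1 : Fin 5) = 2 := by decide
  have e2 : (2 * 2 : Fin 5) = 4 := by decide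
  have e3 : (2 * 3 : Fin 5) = 1 := by decide
  have e4 : (2 * 4 : Fin 5) = 3 := by decide
  rw [e0, e1, e2, e3, e4]; abel

theorem J_rel {x : X} (hx : NZ ρ x) : (2:ℕ) • (J ρ x b + J ρ x (a * b)) = 0 := by
  have h : ∑ k : Fin 5, J ρ x (t * c ^ (k:ℕ) * a * t⁻¹) = 0 := by
    unfold J
    rw [Finset.sum_comm]
    refine Finset.sum_eq_zero fun p _ => ?_
    have := congrArg (ρ (c ^ (p:ℕ) * t)) (hx (a * t⁻¹ * (c ^ (p:ℕ))⁻¹))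
    rw [map_zero, map_sum] at this
    rw [← this]
    refine Finset.sum_congr rfl fun k _ => ?_
    rw [rmul]
    simp only [mul_assoc]
  have e0 : t * c ^ ((0 : Fin 5):ℕ) * a * t⁻¹ = a * b := by decide +kernel
  have e1 : t * c ^ ((1 : Fin 5):ℕ) * a * t⁻¹ =
    c ^ ((1 : Fin 5):ℕ) * a * (c ^ ((1 : Fin 5):ℕ))⁻¹ := by decide +kernel
  have e2 : t * c ^ ((2 : Fin 5):ℕ) * a * t⁻¹ =
    c ^ ((2 : Fin 5):ℕ) * (a * b) * (c ^ ((2 : Fin 5):ℕ))⁻¹ := by decide +kernel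
  have e3 : t * c ^ ((3 : Fin 5):ℕ) * a * t⁻¹ =
    c ^ ((4 : Fin 5):ℕ) * b * (c ^ ((4 : Fin 5):ℕ))⁻¹ := by decide +kernel
  have e4 : t * c ^ ((4 : Fin 5):ℕ) * a * t⁻¹ =
    c ^ ((3 : Fin 5):ℕ) * b * (c ^ ((3 : Fin 5):ℕ))⁻¹ := by decide +kernel
  rw [Fin.sum_univ_five, e0, e1, e2, e3, e4, J_conj, J_conj, J_conj, J_conj, J_a hx] at h
  rw [← h]; abel

theorem decomp (h2 : ∀ x : X, (2:ℕ) • x = 0 → x = 0) {x : X} (hx : NZ ρ x) :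
    (5:ℕ) • x = ∑ p, fam ρ (kap ρ p x) p := by
  have h1 : ∑ p, fam ρ (kap ρ p x) p = (5:ℕ) • x + J ρ x a + J ρ x b + J ρ x (a * b) := by
    have : (5:ℕ) • x = ∑ p : Fin 5, x := by simp
    rw [this]
    unfold J
    rw [← Finset.sum_add_distrib, ← Finset.sum_add_distrib, ← Finset.sum_add_distrib]
    refine Finset.sum_congr rfl fun p _ => ?_
    simp only [fam, kap, LinearMap.comp_apply, N0_apply, map_add, rmul]
    rw [mul_inv_cancel, rone]
    simp only [mul_assoc]
  rw [h1, J_a hx, add_zero, add_assoc, h2 _ (J_rel hx), add_zero]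

/-- independence -/
theorem indep (h5 : ∀ x : X, (5:ℕ) • x = 0 → x = 0) {α β γ : X}
    (uα : U ρ α) (uβ : U ρ β) (uγ : U ρ γ) (nα : NZ ρ α) (nβ : NZ ρ β) (nγ : NZ ρ γ)
    (h : fam ρ α 0 + fam ρ β 1 + fam ρ γ 2 = 0) : α = 0 ∧ β = 0 ∧ γ = 0 := by
  have key : ∀ l : Fin 5, kap ρ l (fam ρ α 0) + kap ρ l (fam ρ β 1) + kap ρ l (fam ρ γ 2) = 0 := by
    intro l; rw [← map_add, ← map_add, h, map_zero]
  simp only [kap_fam uα nα, kap_fam uβ nβ, kap_fam uγ nγ] at key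
  have k0 : (4:ℕ) • α + -β + -γ = 0 := key 0
  have k1 : -α + (4:ℕ) • β + -γ = 0 := key 1
  have k2 : -α + -β + (4:ℕ) • γ = 0 := key 2
  have k3 : -α + -β + -γ = 0 := key 3
  refine ⟨h5 _ ?_, h5 _ ?_, h5 _ ?_⟩
  · have := congrArg₂ (· - ·) k0 k3
    simp only [sub_zero] at this
    rw [← this]; abel
  · have := congrArg₂ (· - ·) k1 k3
    simp only [sub_zero] at this
    rw [← this]; abel
  · have := congrArg₂ (· - ·) k2 k3
    simp only [sub_zero] at this
    rw [← this]; abel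

/-- the bilinear lemma -/
theorem bilin {Y Z : Type*} [AddCommGroup Y] [AddCommGroup Z] {σ : Representation ℤ A5 Y}
    {θ : Representation ℤ A5 Z} (h2 : ∀ z : Z, (2:ℕ) • z = 0 → z = 0)
    (B : X →ₗ[ℤ] Y →ₗ[ℤ] Z) (hB : ∀ h x y, B (ρ h x) (σ h y) = θ h (B x y))
    {x : X} {y : Y} (ux : U ρ x) (nx : NZ ρ x) (uy : U σ y) (ny : NZ σ y)
    (hn : ∀ p q, NZ θ (B (fam ρ x p) (fam σ y q))) :
    ∃ τ : Z, U θ τ ∧ NZ θ τ ∧ ∀ p q, p ≠ q →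
      (5:ℕ) • B (fam ρ x p) (fam σ y q) = fam θ τ p + fam θ τ q := by
  set z : Fin 5 → Fin 5 → Z := fun p q => B (fam ρ x p) (fam σ y q) with hz
  have zeq : ∀ (h : A5) p q, θ h (z p q) = z (h.1 p) (h.1 q) := by
    intro h p q
    simp only [hz]
    rw [← hB, fam_equiv ux, fam_equiv uy]
  have keq : ∀ (h : A5) p q l, kap θ (h.1 l) (z (h.1 p) (h.1 q)) = kap θ l (z p q) := by
    intro h p q l
    rw [← zeq, kap_equiv h2 (hn p q)]
  set S := kap θ 0 (z 0 1) with hS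
  set T := kap θ 1 (z 0 1) with hT
  set W := kap θ 2 (z 0 1) with hW
  have kS : ∀ p q, p ≠ q → kap θ p (z p q) = S := by
    intro p q hpq
    obtain ⟨h, rfl, rfl⟩ := trans2 p q hpq
    rw [keq]
  have kT : ∀ p q, p ≠ q → kap θ q (z p q) = T := by
    intro p q hpq
    obtain ⟨h, rfl, rfl⟩ := trans2 p q hpq
    rw [keq]
  have kW : ∀ p q l, p ≠ q → l ≠ p → l ≠ q → kap θ l (z p q) = W := by
    intro p q l hpq hp hq
    obtain ⟨h, rfl, rfl⟩ := trans2 p q hpq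
    obtain ⟨m, rfl⟩ := h.1.surjective l
    rw [keq]
    obtain ⟨k, k0, k1, rfl⟩ := three_cycle m (fun e => hp (by rw [e])) (fun e => hq (by rw [e]))
    have := keq k 0 1 2
    rw [k0, k1] at this
    rw [this]
  have r1 : ∑ q, z 0 q = 0 := by
    simp only [hz]; rw [← map_sum, sum_fam ny, map_zero]
  have r2 : ∑ p, z p 0 = 0 := by
    simp only [hz]
    rw [← LinearMap.sum_apply, ← map_sum, sum_fam nx, map_zero, LinearMap.zero_apply]
  have ST : S = T := by
    have q1 := congrArg (kap θ 0) r1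
    have q2 := congrArg (kap θ 0) r2
    rw [map_sum, map_zero, Fin.sum_univ_five, kS 0 1 (by decide), kS 0 2 (by decide),
      kS 0 3 (by decide), kS 0 4 (by decide)] at q1
    rw [map_sum, map_zero, Fin.sum_univ_five, kT 1 0 (by decide), kT 2 0 (by decide),
      kT 3 0 (by decide), kT 4 0 (by decide)] at q2
    rw [← sub_eq_zero]
    apply h2; apply h2
    have := congrArg₂ (· - ·) q1 q2
    simp only [sub_zero] at this
    rw [← this]; abel
  have nS : NZ θ S := (hn 0 1).kap 0
  have nW : NZ θ W := (hn 0 1).kap 2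
  refine ⟨S - W, (U_kap h2 (hn 0 1) _).sub (U_kap h2 (hn 0 1) _), nS.sub nW, ?_⟩
  intro p q hpq
  change (5:ℕ) • z p q = _
  rw [decomp h2 (hn p q)]
  have : ∀ l, fam θ (kap θ l (z p q)) l = fam θ W l + ((if l = p then fam θ (S - W) p else 0) +
      (if l = q then fam θ (S - W) q else 0)) := by
    intro l
    by_cases hp : l = p
    · subst hp
      rw [kS _ _ hpq, if_pos rfl, if_neg hpq, fam_sub]; abel
    · by_cases hq : l = q
      · subst hq
        rw [kT _ _ hpq, if_pos rfl, if_neg hp, fam_sub, ST]; abel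
      · rw [kW _ _ _ hpq hp hq, if_neg hp, if_neg hq]; abel
  change ∑ l, fam θ (kap θ l (z p q)) l = _
  simp only [this, Finset.sum_add_distrib, sum_fam nW, Finset.sum_ite_eq', Finset.mem_univ,
    if_true, zero_add]

end

/-- the trilinear theorem -/
theorem trilin {M N : Type*} [AddCommGroup M] [AddCommGroup N] (ρ : Representation ℤ A5 M)
    (σ : Representation ℤ A5 N) (T : M →ₗ[ℤ] M →ₗ[ℤ] M →ₗ[ℤ] N)
    (hT : ∀ h x y z, T (ρ h x) (ρ h y) (ρ h z) = σ h (T x y z))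
    (hM : ∀ x, NZ ρ x) (hN : ∀ x, NZ σ x)
    (hTn : ∀ x y z, ∑ i : Fin 5, T (ρ (c ^ (i:ℕ)) x) (ρ (c ^ (i:ℕ)) y) z = 0)
    (M2 : ∀ x : M, (2:ℕ) • x = 0 → x = 0)
    (N2 : ∀ x : N, (2:ℕ) • x = 0 → x = 0) (N5 : ∀ x : N, (5:ℕ) • x = 0 → x = 0)
    (jac : ∀ x y z, T x y z + T y z x + T z x y = 0) (x y z : M) : T x y z = 0 := by
  set θ := Representation.linHom ρ σ with hθ
  have K2 : ∀ f : M →ₗ[ℤ] N, (2:ℕ) • f = 0 → f = 0 := by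
    intro f hf
    ext m
    exact N2 _ (by rw [← LinearMap.smul_apply, hf]; rfl)
  have hBeq : ∀ h x y, T (ρ h x) (ρ h y) = θ h (T x y) := by
    intro h x y
    ext m
    rw [hθ, Representation.linHom_apply, LinearMap.comp_apply, LinearMap.comp_apply, ← hT, rmul,
      mul_inv_cancel, rone]
  have hBn : ∀ x y, NZ θ (T x y) := by
    intro x y h
    ext m
    rw [LinearMap.sum_apply]
    simp only [← hBeq, ← rmul]
    exact hTn _ _ _
  have hCeq : ∀ h (f : M →ₗ[ℤ] N) y, (LinearMap.id : (M →ₗ[ℤ] N) →ₗ[ℤ] (M →ₗ[ℤ] N)) (θ h f) (ρ h y) =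
      σ h (LinearMap.id (R := ℤ) f y) := by
    intro h f y
    rw [LinearMap.id_apply, LinearMap.id_apply, hθ, Representation.linHom_apply,
      LinearMap.comp_apply, LinearMap.comp_apply, rmul, inv_mul_cancel, rone]
  -- structure of the double bracket
  have dbl : ∀ u v w, U ρ u → U ρ v → U ρ w → ∃ τ κ, U θ τ ∧ NZ θ τ ∧ U σ κ ∧
      (∀ p q, p ≠ q → (5:ℕ) • T (fam ρ u p) (fam ρ v q) = fam θ τ p + fam θ τ q) ∧
      (∀ p q, p ≠ q → (5:ℕ) • (fam θ τ p) (fam ρ w q) = fam σ κ p + fam σ κ q) := by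
    intro u v w hu hv hw
    obtain ⟨τ, uτ, nτ, h1⟩ := bilin K2 T hBeq hu (hM u) hv (hM v) (fun p q => hBn _ _)
    obtain ⟨κ, uκ, nκ, h2⟩ := bilin N2 LinearMap.id hCeq uτ nτ hw (hM w) (fun p q => hN _)
    exact ⟨τ, κ, uτ, nτ, uκ, h1, h2⟩
  have ev : ∀ u v w τ κ, 
      (∀ p q, p ≠ q → (5:ℕ) • T (fam ρ u p) (fam ρ v q) = fam θ τ p + fam θ τ q) →
      (∀ p q, p ≠ q → (5:ℕ) • (fam θ τ p) (fam ρ w q) = fam σ κ p + fam σ κ q) →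
      ∀ p q s, p ≠ q → p ≠ s → q ≠ s →
      (25:ℕ) • T (fam ρ u p) (fam ρ v q) (fam ρ w s) =
        fam σ κ p + fam σ κ q + (fam σ κ s + fam σ κ s) := by
    intro u v w τ κ h1 h2 p q s hpq hps hqs
    have e1 := congrArg (fun f : M →ₗ[ℤ] N => (5:ℕ) • f (fam ρ w s)) (h1 p q hpq)
    simp only [LinearMap.add_apply, smul_add, h2 p s hps, h2 q s hqs, LinearMap.smul_apply,
      smul_smul] at e1
    norm_num at e1
    rw [e1]; abel
  have kz : ∀ u v w τ κ, U ρ u → U ρ v → U ρ w → U σ κ →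
      (∀ p q, p ≠ q → (5:ℕ) • T (fam ρ u p) (fam ρ v q) = fam θ τ p + fam θ τ q) →
      (∀ p q, p ≠ q → (5:ℕ) • (fam θ τ p) (fam ρ w q) = fam σ κ p + fam σ κ q) → κ = 0 := by
    intro u v w τ κ hu hv hw uκ h1 h2
    obtain ⟨τ', κ', -, -, uκ', h1', h2'⟩ := dbl v w u hv hw hu
    obtain ⟨τ'', κ'', -, -, uκ'', h1'', h2''⟩ := dbl w u v hw hu hv
    have e := ev _ _ _ _ _ h1 h2 0 1 2 (by decide) (by decide) (by decide)
    have e' := ev _ _ _ _ _ h1' h2' 1 2 0 (by decide) (by decide) (by decide)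
    have e'' := ev _ _ _ _ _ h1'' h2'' 2 0 1 (by decide) (by decide) (by decide)
    have j := congrArg (fun n : N => (25:ℕ) • n) (jac (fam ρ u 0) (fam ρ v 1) (fam ρ w 2))
    simp only [smul_add, e, e', e'', smul_zero] at j
    have := indep (ρ := σ) N5 (α := κ + (κ' + κ') + κ'') (β := κ + κ' + (κ'' + κ''))
      (γ := κ + κ + κ' + κ'') ((uκ.add (uκ'.add uκ')).add uκ'') ((uκ.add uκ').add (uκ''.add uκ''))
      (((uκ.add uκ).add uκ').add uκ'') (hN _) (hN _) (hN _)
      (by simp only [fam_add]; rw [← j]; abel)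
    obtain ⟨ha, hb, hc⟩ := this
    apply N2; apply N2
    have h3 : (2:ℕ) • (2:ℕ) • κ = (3:ℕ) • (κ + κ + κ' + κ'') - (κ + (κ' + κ') + κ'') -
      (κ + κ' + (κ'' + κ'')) := by module
    rw [h3, ha, hb, hc]; simp
  have main : ∀ u v w, U ρ u → U ρ v → U ρ w → ∀ p q s,
      T (fam ρ u p) (fam ρ v q) (fam ρ w s) = 0 := by
    intro u v w hu hv hw
    obtain ⟨τ, κ, uτ, nτ, uκ, h1, h2⟩ := dbl u v w hu hv hw
    have k0 := kz u v w τ κ hu hv hw uκ h1 h2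
    have c1 : ∀ p s, p ≠ s → (fam θ τ p) (fam ρ w s) = 0 := by
      intro p s hps
      apply N5
      rw [h2 p s hps, k0]; simp [fam]
    have c2 : ∀ p s, (fam θ τ p) (fam ρ w s) = 0 := by
      intro p s
      by_cases hps : p = s
      · subst hps
        have := congrArg (fun m => (fam θ τ p) m) (sum_fam (hM w))
        simp only [map_sum, map_zero] at this
        rw [Finset.sum_eq_single p (fun q _ hq => c1 p q hq.symm) (by simp)] at this
        exact this
      · exact c1 p s hps
    have c3 : ∀ p q s, p ≠ q → T (fam ρ u p) (fam ρ v q) (fam ρ w s) = 0 := by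
      intro p q s hpq
      apply N5
      rw [← LinearMap.smul_apply, h1 p q hpq, LinearMap.add_apply, c2, c2, add_zero]
    intro p q s
    by_cases hpq : p = q
    · subst hpq
      have := congrArg (fun y => T (fam ρ u p) y (fam ρ w s)) (sum_fam (hM v))
      simp only [map_sum, map_zero, LinearMap.sum_apply, LinearMap.zero_apply] at this
      rw [Finset.sum_eq_single p (fun q _ hq => c3 p q s hq.symm) (by simp)] at this
      exact this
    · exact c3 p q s hpq
  apply N5; apply N5; apply N5
  have : (5:ℕ) • (5:ℕ) • (5:ℕ) • T x y z = T ((5:ℕ) • x) ((5:ℕ) • y) ((5:ℕ) • z) := by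
    simp only [map_nsmul, LinearMap.smul_apply]
  rw [this, decomp M2 (hM x), decomp M2 (hM y), decomp M2 (hM z)]
  simp only [map_sum, LinearMap.sum_apply]
  refine Finset.sum_eq_zero fun i _ => Finset.sum_eq_zero fun j _ => Finset.sum_eq_zero fun k _ => ?_
  exact main _ _ _ (U_kap M2 (hM x) _) (U_kap M2 (hM y) _) (U_kap M2 (hM z) _) _ _ _

theorem descend {G E : Type*} [Group G] [Monoid E] (π : G →* A5) (hπ : Function.Surjective π)
    (f : G →* E) (hf : ∀ g, π g = 1 → f g = 1) : ∃ f' : A5 →* E, ∀ g, f' (π g) = f g := by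
  refine ⟨(QuotientGroup.lift π.ker f (fun g hg => hf g hg)).comp
    (QuotientGroup.quotientKerEquivOfSurjective π hπ).symm.toMonoidHom, fun g => ?_⟩
  have : (QuotientGroup.quotientKerEquivOfSurjective π hπ).symm (π g) = QuotientGroup.mk g := by
    rw [MulEquiv.symm_apply_eq]; rfl
  simp only [MonoidHom.comp_apply, MulEquiv.toMonoidHom_eq_coe, MonoidHom.coe_coe, this]
  exact QuotientGroup.lift_mk' _ _ g

theorem tors {H : Type*} [Group H] {r n : ℕ} (hH : IsPGroup r H) (hn : Nat.Coprime r n) (x : H)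
    (hx : x ^ n = 1) : x = 1 := by
  obtain ⟨k, hk⟩ := hH x
  have h1 := orderOf_dvd_of_pow_eq_one hk
  have h2 := orderOf_dvd_of_pow_eq_one hx
  have h3 := Nat.dvd_gcd h1 h2
  rw [Nat.Coprime.pow_left k hn] at h3
  exact orderOf_eq_one_iff.1 (Nat.dvd_one.1 h3)

section grp
open scoped commutatorElement IsMulCommutative
variable {Q : Type*} [Group Q]

/-- commutators with `k` are central -/
def Good (k : Q) : Prop := ∀ z, ⁅k, z⁆ ∈ Subgroup.center Q

theorem cen_comm {x : Q} (hx : x ∈ Subgroup.center Q) (y : Q) : y * x = x * y :=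
  Subgroup.mem_center_iff.1 hx y

theorem comm_mul_left {k' : Q} (h : Good k') (k z : Q) : ⁅k * k', z⁆ = ⁅k, z⁆ * ⁅k', z⁆ := by
  have : ⁅k * k', z⁆ = k * ⁅k', z⁆ * k⁻¹ * ⁅k, z⁆ := by simp only [commutatorElement_def]; group
  rw [this, cen_comm (h z) k, mul_inv_cancel_right, cen_comm (h z)]

theorem Good.mul {k k' : Q} (h : Good k) (h' : Good k') : Good (k * k') := by
  intro z; rw [comm_mul_left h']; exact mul_mem (h z) (h' z)

theorem good_central {k : Q} (h : k ∈ Subgroup.center Q) : Good k := by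
  intro z
  have : ⁅k, z⁆ = 1 := by
    rw [commutatorElement_eq_one_iff_mul_comm]; exact (cen_comm h z).symm
  rw [this]; exact one_mem _

theorem comm_central {k : Q} (h : k ∈ Subgroup.center Q) (z : Q) : ⁅k, z⁆ = 1 := by
  rw [commutatorElement_eq_one_iff_mul_comm]; exact (cen_comm h z).symm

theorem comm_conj {k : Q} (h : Good k) (x z : Q) : ⁅x * k * x⁻¹, z⁆ = ⁅k, z⁆ := by
  have e : x * k * x⁻¹ = (⁅k, x⁆)⁻¹ * k := by simp only [commutatorElement_def]; group
  rw [e, comm_mul_left h, comm_central (inv_mem (h x)), one_mul]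

theorem comm_mul_right {k : Q} (h : Good k) (z z' : Q) : ⁅k, z * z'⁆ = ⁅k, z⁆ * ⁅k, z'⁆ := by
  have : ⁅k, z * z'⁆ = ⁅k, z⁆ * (z * ⁅k, z'⁆ * z⁻¹) := by simp only [commutatorElement_def]; group
  rw [this, cen_comm (h z') z, mul_inv_cancel_right]

theorem Good.conj {k : Q} (h : Good k) (x : Q) : Good (x * k * x⁻¹) := by
  intro z; rw [comm_conj h]; exact h z

theorem tri_left (h4 : ∀ x y : Q, Good ⁅x, y⁆) (x x' y z : Q) : ⁅⁅x * x', y⁆, z⁆ = ⁅⁅x, y⁆, z⁆ * ⁅⁅x', y⁆, z⁆ := by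
  have : ⁅x * x', y⁆ = (x * ⁅x', y⁆ * x⁻¹) * ⁅x, y⁆ := by simp only [commutatorElement_def]; group
  rw [this, comm_mul_left (h4 _ _), comm_conj (h4 _ _), cen_comm (h4 _ _ _)]

theorem tri_mid (h4 : ∀ x y : Q, Good ⁅x, y⁆) (x y y' z : Q) : ⁅⁅x, y * y'⁆, z⁆ = ⁅⁅x, y⁆, z⁆ * ⁅⁅x, y'⁆, z⁆ := by
  have : ⁅x, y * y'⁆ = ⁅x, y⁆ * (y * ⁅x, y'⁆ * y⁻¹) := by simp only [commutatorElement_def]; group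
  rw [this, comm_mul_left ((h4 _ _).conj _), comm_conj (h4 _ _)]

variable (h4 : ∀ x y : Q, Good ⁅x, y⁆)

def T3 (x y : Q) : Q →* Subgroup.center Q :=
  MonoidHom.mk' (fun z => ⟨⁅⁅x, y⁆, z⁆, h4 x y z⟩) fun z z' =>
    Subtype.ext (comm_mul_right (h4 x y) z z')

def T2 (x : Q) : Q →* (Abelianization Q →* Subgroup.center Q) :=
  MonoidHom.mk' (fun y => Abelianization.lift (T3 h4 x y)) fun y y' => by
    apply Abelianization.hom_ext
    ext z
    exact tri_mid h4 x y y' z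

def T1 : Q →* (Abelianization Q →* (Abelianization Q →* Subgroup.center Q)) :=
  MonoidHom.mk' (fun x => Abelianization.lift (T2 h4 x)) fun x x' => by
    apply Abelianization.hom_ext
    ext y : 1
    apply Abelianization.hom_ext
    ext z
    exact tri_left h4 x x' y z

def T0 : Abelianization Q →* (Abelianization Q →* (Abelianization Q →* Subgroup.center Q)) :=
  Abelianization.lift (T1 h4)

def TL : Additive (Abelianization Q) →ₗ[ℤ] Additive (Abelianization Q) →ₗ[ℤ]
    Additive (Abelianization Q) →ₗ[ℤ] Additive (Subgroup.center Q) :=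
  (AddMonoidHom.mk' (fun x => (AddMonoidHom.mk' (fun y =>
    (MonoidHom.toAdditive (T0 h4 x.toMul y.toMul)).toIntLinearMap) (fun y y' => by
      ext z; simp)).toIntLinearMap) (fun x x' => by
      ext y z; simp)).toIntLinearMap

def iM (x : Q) : Additive (Abelianization Q) := Additive.ofMul (Abelianization.of x)

theorem iM_surj (m : Additive (Abelianization Q)) : ∃ x : Q, iM x = m :=
  QuotientGroup.mk_surjective (s := commutator Q) m.toMul

theorem iM_mul (x y : Q) : iM (x * y) = iM x + iM y := by simp [iM]

theorem TL_apply (x y z : Q) :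
    TL h4 (iM x) (iM y) (iM z) = Additive.ofMul ⟨⁅⁅x, y⁆, z⁆, h4 x y z⟩ := rfl

def rM {G : Type*} [Group G] (ψ : G →* MulAut Q) :
    G →* Module.End ℤ (Additive (Abelianization Q)) where
  toFun g := (MonoidHom.toAdditive (Abelianization.map (ψ g).toMonoidHom)).toIntLinearMap
  map_one' := by
    ext m
    obtain ⟨x, rfl⟩ := iM_surj m
    rw [map_one]; rfl
  map_mul' g h := by
    ext m
    obtain ⟨x, rfl⟩ := iM_surj m
    rw [map_mul]; rfl

theorem rM_apply {G : Type*} [Group G] (ψ : G →* MulAut Q) (g : G) (x : Q) :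
    rM ψ g (iM x) = iM (ψ g x) := rfl

def rN {G : Type*} [Group G] (ψ : G →* MulAut Q) :
    G →* Module.End ℤ (Additive (Subgroup.center Q)) where
  toFun g := (MonoidHom.toAdditive (Subgroup.centerCongr (ψ g)).toMonoidHom).toIntLinearMap
  map_one' := by
    rw [map_one]; rfl
  map_mul' g h := by
    rw [map_mul]; rfl

theorem rN_apply {G : Type*} [Group G] (ψ : G →* MulAut Q) (g : G) (x : Subgroup.center Q) :
    (Additive.toMul (rN ψ g (Additive.ofMul x))).1 = ψ g x.1 := rfl

theorem class3 {G : Type*} [Group G] {r : ℕ} (hQ : IsPGroup r Q) (r2 : Nat.Coprime r 2)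
    (r5 : Nat.Coprime r 5) (h4 : ∀ x y : Q, Good ⁅x, y⁆) (ψ : G →* MulAut Q) (π : G →* A5)
    (hπ : Function.Surjective π)
    (inn : ∀ g, π g = 1 → ∃ q : Q, ∀ x, ψ g x = q * x * q⁻¹)
    (g : G) (hg : π g = c)
    (hnorm : ∀ x : Q, x * ψ g x * ψ (g ^ 2) x * ψ (g ^ 3) x * ψ (g ^ 4) x = 1) (x y z : Q) :
    ⁅⁅x, y⁆, z⁆ = 1 := by
  obtain ⟨ρ, hρ⟩ := descend π hπ (rM ψ) (by
    intro g hg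
    obtain ⟨q, hq⟩ := inn g hg
    ext m
    obtain ⟨x, rfl⟩ := iM_surj m
    rw [rM_apply, hq, iM_mul, iM_mul, Module.End.one_apply]
    have : iM q + iM q⁻¹ = 0 := by rw [← iM_mul, mul_inv_cancel]; rfl
    rw [add_comm (iM q), add_assoc, this, add_zero])
  obtain ⟨σ, hσ⟩ := descend π hπ (rN ψ) (by
    intro g hg
    obtain ⟨q, hq⟩ := inn g hg
    ext m
    change (ψ g m.toMul.1) = m.toMul.1
    rw [hq, cen_comm m.toMul.2, mul_inv_cancel_right])
  have hρ' : ∀ i : ℕ, ρ (c ^ i) = rM ψ (g ^ i) := by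
    intro i; rw [← hg, ← map_pow, hρ]
  have hσ' : ∀ i : ℕ, σ (c ^ i) = rN ψ (g ^ i) := by
    intro i; rw [← hg, ← map_pow, hσ]
  have hM : ∀ m, NZ ρ m := by
    intro m h
    simp only [← rmul]
    obtain ⟨x, hx⟩ := iM_surj (ρ h m)
    rw [← hx, Fin.sum_univ_five]
    simp only [hρ', rM_apply, ← iM_mul]
    have := hnorm x
    simp only [Fin.val_zero, Fin.val_one, Fin.val_two, pow_zero, pow_one, map_one, MulAut.one_apply]
    change iM (x * ψ g x * ψ (g ^ 2) x * ψ (g ^ 3) x * ψ (g ^ 4) x) = 0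
    rw [this]; rfl
  have hN : ∀ m, NZ σ m := by
    intro m h
    simp only [← rmul]
    generalize (σ h) m = n
    rw [Fin.sum_univ_five]
    simp only [hσ']
    have := hnorm n.toMul.1
    apply Additive.toMul.injective
    apply Subtype.ext
    change ψ (g ^ 0) n.toMul.1 * ψ (g ^ 1) n.toMul.1 * ψ (g ^ 2) n.toMul.1 * ψ (g ^ 3) n.toMul.1 *
      ψ (g ^ 4) n.toMul.1 = 1
    rw [pow_zero, pow_one, map_one, MulAut.one_apply, this]
  have key := trilin ρ σ (TL h4) (by
      intro h m1 m2 m3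
      obtain ⟨k, rfl⟩ := hπ h
      obtain ⟨x, rfl⟩ := iM_surj m1
      obtain ⟨y, rfl⟩ := iM_surj m2
      obtain ⟨z, rfl⟩ := iM_surj m3
      rw [hρ, hσ, rM_apply, rM_apply, rM_apply, TL_apply, TL_apply]
      apply Additive.toMul.injective
      apply Subtype.ext
      rw [rN_apply]
      simp only [toMul_ofMul, map_commutatorElement]) hM hN (by
      intro m1 m2 m3
      obtain ⟨x, rfl⟩ := iM_surj m1
      obtain ⟨y, rfl⟩ := iM_surj m2
      obtain ⟨z, rfl⟩ := iM_surj m3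
      simp only [hρ', rM_apply, Fin.sum_univ_five, TL_apply]
      apply Additive.toMul.injective
      apply Subtype.ext
      change ⁅⁅ψ (g ^ 0) x, ψ (g ^ 0) y⁆, z⁆ * ⁅⁅ψ (g ^ 1) x, ψ (g ^ 1) y⁆, z⁆ *
        ⁅⁅ψ (g ^ 2) x, ψ (g ^ 2) y⁆, z⁆ * ⁅⁅ψ (g ^ 3) x, ψ (g ^ 3) y⁆, z⁆ *
        ⁅⁅ψ (g ^ 4) x, ψ (g ^ 4) y⁆, z⁆ = 1
      rw [← comm_mul_left (h4 _ _), ← comm_mul_left (h4 _ _), ← comm_mul_left (h4 _ _),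
        ← comm_mul_left (h4 _ _)]
      simp only [← map_commutatorElement]
      rw [pow_zero, pow_one, map_one, MulAut.one_apply, hnorm, commutatorElement_one_left])
      (fun m hm => by
        have hA : IsPGroup r (Abelianization Q) :=
          hQ.of_surjective Abelianization.of (QuotientGroup.mk_surjective (s := commutator Q))
        exact tors hA r2 m.toMul hm)
      (fun m hm => tors (hQ.to_subgroup _) r2 m.toMul hm)
      (fun m hm => tors (hQ.to_subgroup _) r5 m.toMul hm)
      (by
      intro m1 m2 m3
      obtain ⟨x, rfl⟩ := iM_surj m1
      obtain ⟨y, rfl⟩ := iM_surj m2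
      obtain ⟨z, rfl⟩ := iM_surj m3
      simp only [TL_apply]
      apply Additive.toMul.injective
      apply Subtype.ext
      change ⁅⁅x, y⁆, z⁆ * ⁅⁅y, z⁆, x⁆ * ⁅⁅z, x⁆, y⁆ = 1
      have cj : ∀ a b d e : Q, ⁅⁅a, b⁆, d * e * d⁻¹⁆ = ⁅⁅a, b⁆, e⁆ := by
        intro a b d e
        have := comm_mul_right (h4 a b) (d * e * d⁻¹) d
        rw [inv_mul_cancel_right, comm_mul_right (h4 a b), cen_comm (h4 a b e)] at this
        exact (mul_right_cancel this).symm
      have := commutatorElement_commutatorElement_conj_mul x y z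
      rwa [cj, cj, cj] at this)
    (iM x) (iM y) (iM z)
  rw [TL_apply] at key
  exact congrArg (fun n : Additive (Subgroup.center Q) => n.toMul.1) key
end grp

section final
open scoped commutatorElement

theorem exists_proj {G : Type*} [Group G] (R : Subgroup G) (hRnormal : R.Normal)
    (e : (G ⧸ R) ≃* alternatingGroup (Fin 5)) (g : G) (hg : orderOf g = 5) (hgR : g ∉ R) :
    ∃ π : G →* A5, Function.Surjective π ∧ (∀ h, π h = 1 ↔ h ∈ R) ∧ π g = c := by
  let p : G →* A5 := e.toMonoidHom.comp (QuotientGroup.mk' R)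
  have hp : Function.Surjective p := e.surjective.comp (QuotientGroup.mk'_surjective R)
  have hk : ∀ h, p h = 1 ↔ h ∈ R := fun h => by
    change e (QuotientGroup.mk h) = 1 ↔ _
    rw [EmbeddingLike.map_eq_one_iff, QuotientGroup.eq_one_iff]
  have ho : orderOf (p g).1 = 5 := by
    have : Fact (Nat.Prime 5) := ⟨by norm_num⟩
    apply orderOf_eq_prime
    · have hg5 : g ^ 5 = 1 := orderOf_dvd_iff_pow_eq_one.1 hg.dvd
      rw [← Subgroup.coe_pow, ← map_pow, hg5, map_one]; rfl
    · intro h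
      exact hgR ((hk g).1 (Subtype.ext h))
  have hcyc : ∀ s : Equiv.Perm (Fin 5), orderOf s = 5 → s.cycleType = {5} := by
    intro s hs
    have h1 : s.IsCycle := Equiv.Perm.isCycle_of_prime_order'' (by simp; norm_num) (by simp [hs])
    rw [h1.cycleType, ← h1.orderOf, hs]
  have hc : (c.1).cycleType = {5} := by
    apply hcyc
    have : Fact (Nat.Prime 5) := ⟨by norm_num⟩
    apply orderOf_eq_prime
    · decide
    · decide
  obtain ⟨s, hs⟩ := isConj_iff.1 (Equiv.Perm.isConj_iff_cycleType_eq.2 ((hcyc _ ho).trans hc.symm))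
  refine ⟨(MulAut.conjNormal (H := A5) s).toMonoidHom.comp p,
    (MulAut.conjNormal (H := A5) s).surjective.comp hp, fun h => ?_, ?_⟩
  · change (MulAut.conjNormal (H := A5) s) (p h) = 1 ↔ _
    rw [EmbeddingLike.map_eq_one_iff, hk]
  · apply Subtype.ext
    change ((MulAut.conjNormal (H := A5) s) (p g)).1 = c.1
    rw [MulAut.conjNormal_apply]
    exact hs

/-- automorphisms of the quotient by a characteristic subgroup -/
def quotAut {R : Type*} [Group R] (L : Subgroup R) [L.Normal] [hL : L.Characteristic] :
    MulAut R →* MulAut (R ⧸ L) where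
  toFun f := QuotientGroup.congr L L f (Subgroup.characteristic_iff_map_eq.1 hL f)
  map_one' := by
    ext x
    obtain ⟨x, rfl⟩ := QuotientGroup.mk_surjective x
    rfl
  map_mul' f h := by
    ext x
    obtain ⟨x, rfl⟩ := QuotientGroup.mk_surjective x
    rfl

theorem quotAut_mk {R : Type*} [Group R] (L : Subgroup R) [L.Normal] [hL : L.Characteristic]
    (f : MulAut R) (x : R) : quotAut L f (QuotientGroup.mk x) = QuotientGroup.mk (f x) := rfl

theorem norm_one {R : Type*} [Group R] [Finite R] (f : MulAut R) (h5 : f ^ 5 = 1)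
    (hf : ∀ x, f x = x → x = 1) (x : R) :
    x * f x * (f ^ 2) x * (f ^ 3) x * (f ^ 4) x = 1 := by
  have inj : Function.Injective (fun w : R => w⁻¹ * f w) := by
    intro u v huv
    have huv' : u⁻¹ * f u = v⁻¹ * f v := huv
    have : f (u * v⁻¹) = u * v⁻¹ := by
      rw [map_mul, map_inv]
      have h1 : f u = u * (v⁻¹ * f v) := by rw [← huv', mul_inv_cancel_left]
      rw [h1]; group
    exact mul_inv_eq_one.1 (hf _ this)
  obtain ⟨w, rfl⟩ := Finite.surjective_of_injective inj x
  have e2 : ∀ y, (f ^ 2) y = f (f y) := fun y => by rw [pow_two]; rfl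
  have e3 : ∀ y, (f ^ 3) y = f (f (f y)) := fun y => by rw [pow_succ, pow_two]; rfl
  have e4 : ∀ y, (f ^ 4) y = f (f (f (f y))) := fun y => by rw [pow_succ, pow_succ, pow_two]; rfl
  have e5 : ∀ y, f (f (f (f (f y)))) = y := fun y => by
    have : (f ^ 5) y = f (f (f (f (f y)))) := by rw [pow_succ, pow_succ, pow_succ, pow_two]; rfl
    rw [← this, h5]; rfl
  simp only [e2, e3, e4, map_mul, map_inv, e5]
  group

theorem main {r : ℕ} (hr : r.Prime) (hodd : Odd r) (hr5 : r ≠ 5)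
    {G : Type*} [Group G] [Finite G]
    (R : Subgroup G) (hRnormal : R.Normal)
    (hRcard : ∃ k : ℕ, Nat.card R = r ^ k)
    (hquot : Nonempty ((G ⧸ R) ≃* alternatingGroup (Fin 5)))
    (g : G) (hg : orderOf g = 5)
    (hfpf : ∀ x ∈ R, g * x * g⁻¹ = x → x = 1) :
    Group.IsNilpotent R ∧ upperCentralSeries R 2 = ⊤ := by
  obtain ⟨e⟩ := hquot
  obtain ⟨k, hk⟩ := hRcard
  have hP : IsPGroup r R := IsPGroup.of_card hk
  have : Fact r.Prime := ⟨hr⟩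
  have hnil : Group.IsNilpotent R := hP.isNilpotent
  refine ⟨hnil, ?_⟩
  have r2 : Nat.Coprime r 2 := Nat.coprime_two_right.2 hodd
  have r5 : Nat.Coprime r 5 := (Nat.coprime_primes hr (by norm_num)).2 hr5
  have hgR : g ∉ R := fun h => by
    have := hfpf g h (by group)
    rw [this, orderOf_one] at hg
    omega
  obtain ⟨π, hπ, hker, hπg⟩ := exists_proj R hRnormal e g hg hgR
  let L : Subgroup R := (⊤ : Subgroup R).lowerCentralSeries 3
  let ψ0 : G →* MulAut R := MulAut.conjNormal
  let ψ : G →* MulAut (R ⧸ L) := (quotAut L).comp ψ0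
  have hψ : ∀ h x, ψ h (QuotientGroup.mk x) = QuotientGroup.mk (ψ0 h x) := fun h x => rfl
  have hQ : IsPGroup r (R ⧸ L) := hP.to_quotient L
  have h4 : ∀ x y : R ⧸ L, Good ⁅x, y⁆ := by
    intro x y z
    obtain ⟨x, rfl⟩ := QuotientGroup.mk'_surjective L x
    obtain ⟨y, rfl⟩ := QuotientGroup.mk'_surjective L y
    obtain ⟨z, rfl⟩ := QuotientGroup.mk'_surjective L z
    rw [Subgroup.mem_center_iff]
    intro w
    obtain ⟨w, rfl⟩ := QuotientGroup.mk'_surjective L w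
    apply Eq.symm
    rw [← commutatorElement_eq_one_iff_mul_comm]
    simp only [← map_commutatorElement]
    apply (QuotientGroup.eq_one_iff _).2
    exact Subgroup.commutator_mem_commutator (Subgroup.commutator_mem_commutator
      (Subgroup.commutator_mem_commutator (Subgroup.mem_top x) (Subgroup.mem_top y))
      (Subgroup.mem_top z)) (Subgroup.mem_top w)
  have hn0 := norm_one (ψ0 g) (by rw [← map_pow, ← hg, pow_orderOf_eq_one, map_one]) (by
    intro x hx
    apply Subtype.ext
    apply hfpf x.1 x.2
    have := congrArg Subtype.val hx
    rwa [MulAut.conjNormal_apply] at this)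
  have key := class3 hQ r2 r5 h4 ψ π hπ (by
    intro h hh
    refine ⟨QuotientGroup.mk ⟨h, (hker h).1 hh⟩, fun x => ?_⟩
    obtain ⟨x, rfl⟩ := QuotientGroup.mk_surjective x
    rw [hψ, ← QuotientGroup.mk_mul, ← QuotientGroup.mk_inv, ← QuotientGroup.mk_mul]
    congr 1) g hπg (by
    intro x
    obtain ⟨x, rfl⟩ := QuotientGroup.mk_surjective x
    have h1 := hn0 x
    simp only [← map_pow] at h1
    rw [hψ, hψ, hψ, hψ]
    exact congrArg (QuotientGroup.mk' L) h1)
  have hc1 : (⊤ : Subgroup R).lowerCentralSeries 1 ≤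
      (Subgroup.center (R ⧸ L)).comap (QuotientGroup.mk' L) := by
    change ⁅(⊤ : Subgroup R), (⊤ : Subgroup R)⁆ ≤ _
    rw [Subgroup.commutator_le]
    intro x _ y _
    rw [Subgroup.mem_comap, Subgroup.mem_center_iff]
    intro w
    apply Eq.symm
    rw [← commutatorElement_eq_one_iff_mul_comm, map_commutatorElement]
    exact key _ _ _
  have hc2 : (⊤ : Subgroup R).lowerCentralSeries 2 ≤ (⊤ : Subgroup R).lowerCentralSeries 3 := by
    change ⁅(⊤ : Subgroup R).lowerCentralSeries 1, (⊤ : Subgroup R)⁆ ≤ L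
    rw [Subgroup.commutator_le]
    intro x hx y _
    have := hc1 hx
    rw [Subgroup.mem_comap, Subgroup.mem_center_iff] at this
    have h2 := (this (QuotientGroup.mk' L y)).symm
    rw [← commutatorElement_eq_one_iff_mul_comm, ← map_commutatorElement] at h2
    exact (QuotientGroup.eq_one_iff _).1 h2
  have hst : ∀ n, (⊤ : Subgroup R).lowerCentralSeries 2 ≤
      (⊤ : Subgroup R).lowerCentralSeries (n + 2) := by
    intro n
    induction n with
    | zero => exact le_rfl
    | succ n ih =>
      refine hc2.trans ?_
      exact Subgroup.commutator_mono ih le_rfl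
  refine Subgroup.lowerCentralSeries_eq_bot_iff_upperCentralSeries_eq_top.1 ?_
  obtain ⟨n, hn⟩ := Subgroup.nilpotent_iff_lowerCentralSeries.1 hnil
  rw [eq_bot_iff, ← hn]
  exact (hst n).trans (Subgroup.lowerCentralSeries_antitone _ (by omega))
end final
end FPF

/-- Theorem 3.1 (Astill–Parker–Waldecker): if `G` is a finite group with a normal
`r`-subgroup `R` (with `r` an odd prime, `r ≠ 5`) such that `G ⧸ R ≅ Alt(5)`, and some
element of order `5` of `G` acts fixed point freely on `R` by conjugation, then `R` is
nilpotent of class at most two. -/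
theorem class_at_most_two_of_fpf_order_five
    (r : ℕ) (hr : r.Prime) (hodd : Odd r) (hr5 : r ≠ 5)
    (G : Type*) [Group G] [Finite G]
    (R : Subgroup G) (hRnormal : R.Normal)
    (hRcard : ∃ k : ℕ, Nat.card R = r ^ k)
    (hquot : Nonempty ((G ⧸ R) ≃* alternatingGroup (Fin 5)))
    (g : G) (hg : orderOf g = 5)
    (hfpf : ∀ x ∈ R, g * x * g⁻¹ = x → x = 1) :
    Group.IsNilpotent R ∧ upperCentralSeries R 2 = ⊤ := by
  exact FPF.main hr hodd hr5 R hRnormal hRcard hquot g hg hfpf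
end

section
/- Let r be an odd prime with r ≠ 5 and let V be the deleted permutation module over ZMod r with the action of Y = alternatingGroup (Fin 5). Let W be any finite-dimensional ZMod r-vector space with a ZMod r-linear action of Y that admits a chain of Y-invariant subspaces 0 = W₀ ⊆ W₁ ⊆ ⋯ ⊆ Wₙ = W such that each successive quotient W_{i+1} ⧸ W_i is Y-equivariantly isomorphic to V. Then W is completely reducible: every Y-invariant subspace of W has a Y-invariant direct complement. -/
/-- The deleted permutation module: functions `Fin 5 → ZMod r` summing to zero. -/
def V (r : ℕ) : Submodule (ZMod r) (Fin 5 → ZMod r) where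
  carrier := {f | ∑ i, f i = 0}
  add_mem' := by
    intro a b ha hb
    simp only [Set.mem_setOf_eq, Pi.add_apply, Finset.sum_add_distrib] at *
    rw [ha, hb, add_zero]
  zero_mem' := by simp
  smul_mem' := by
    intro c f hf
    simp only [Set.mem_setOf_eq, Pi.smul_apply, smul_eq_mul, ← Finset.mul_sum] at *
    rw [hf, mul_zero]

/-- The permutation action of `Equiv.Perm (Fin 5)` on `V r`, given by `σ • f = f ∘ σ⁻¹`. -/
def rho (r : ℕ) : Representation (ZMod r) (Equiv.Perm (Fin 5)) (V r) where
  toFun σ :=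
    { toFun := fun f => ⟨fun i => (f : Fin 5 → ZMod r) (σ⁻¹ i),
        (Equiv.sum_comp σ⁻¹ (f : Fin 5 → ZMod r)).trans f.2⟩
      map_add' := fun _ _ => rfl
      map_smul' := fun _ _ => rfl }
  map_one' := rfl
  map_mul' := fun _ _ => rfl


namespace DPM

abbrev Y := alternatingGroup (Fin 5)

/-- A permutation of `Fin 5` from a table of values and a table of values of its inverse. -/
def mk (a b : Fin 5 → Fin 5) (h1 : ∀ i, b (a i) = i := by decide)
    (h2 : ∀ i, a (b i) = i := by decide)
    (h3 : Equiv.Perm.sign (⟨a, b, h1, h2⟩ : Equiv.Perm (Fin 5)) = 1 := by decide) : Y :=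
  ⟨⟨a, b, h1, h2⟩, h3⟩

def cc : Y := mk ![1,2,3,4,0] ![4,0,1,2,3]
def v1 : Y := mk ![0,2,1,4,3] ![0,2,1,4,3]
def v2 : Y := mk ![0,3,4,1,2] ![0,3,4,1,2]
def v3 : Y := mk ![0,4,3,2,1] ![0,4,3,2,1]
def tt : Y := mk ![0,1,4,2,3] ![0,1,3,4,2]
def tinv : Y := mk ![0,1,3,4,2] ![0,1,4,2,3]
def g16 : Y := mk ![0,3,1,2,4] ![0,2,3,1,4]
def r3 : Y := mk ![1,0,2,4,3] ![1,0,2,4,3]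

lemma c5 : cc ^ 5 = 1 := by decide
lemma tvv : v1 * v1 = 1 ∧ v2 * v2 = 1 ∧ v1 * v2 = v3 ∧ v2 * v1 = v3 := by decide

lemma stab : ∀ a : Y, (a : Equiv.Perm (Fin 5)) 0 = 0 →
    ∃ j : Fin 3, ∃ v ∈ [1, v1, v2, v3], a = tt ^ (j : ℕ) * v := by decide +kernel

lemma cpow0 : ∀ i : Fin 5, ((cc ^ (i : ℕ) : Y) : Equiv.Perm (Fin 5)) 0 = i := by decide

def vv : Fin 4 → Y := ![1, v1, v2, v3]
def gg (i : Fin 5) : Y := cc ^ (i : ℕ)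

lemma stab_form (a : Y) (ha : (a : Equiv.Perm (Fin 5)) 0 = 0) :
    ∃ j : ℕ, ∃ k : Fin 4, a = tt ^ j * vv k := by
  obtain ⟨j, v, hv, h⟩ := stab a ha
  simp only [List.mem_cons, List.not_mem_nil, or_false] at hv
  rcases hv with rfl | rfl | rfl | rfl
  · exact ⟨j, 0, h⟩
  · exact ⟨j, 1, h⟩
  · exact ⟨j, 2, h⟩
  · exact ⟨j, 3, h⟩

section
variable {r : ℕ}

lemma rho_apply (σ : Equiv.Perm (Fin 5)) (f : V r) (i : Fin 5) :
    ((rho r σ f : V r) : Fin 5 → ZMod r) i = (f : Fin 5 → ZMod r) (σ⁻¹ i) := rfl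

lemma V_c5 (f : V r) : ∑ i : Fin 5, rho r ((gg i : Y) : Equiv.Perm (Fin 5)) f = (0 : ZMod r) • f := by
  have hf : ∑ i, (f : Fin 5 → ZMod r) i = 0 := f.2
  have key : ∀ j k : Fin 5, ((gg k : Y) : Equiv.Perm (Fin 5))⁻¹ j = j - k := by decide
  ext j
  simp only [AddSubmonoidClass.coe_finsetSum, Finset.sum_apply, rho_apply, key, zero_smul]
  exact (Equiv.sum_comp (Equiv.subLeft j) (f : Fin 5 → ZMod r)).trans hf

def zz (p : Fin 5 × Fin 4) : Y := gg p.1 * vv p.2 * (gg p.1)⁻¹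

def tab : Fin 5 → Fin 4 → Fin 5 → Fin 5 := fun i k j =>
  (![![0,1,2,3,4], ![0,2,1,4,3], ![0,3,4,1,2], ![0,4,3,2,1]] : Fin 4 → Fin 5 → Fin 5) k (j - i) + i

lemma V_z (f : V r) : ∑ p, rho r ((zz p : Y) : Equiv.Perm (Fin 5)) f = (5 : ZMod r) • f := by
  have hf : ∑ i, (f : Fin 5 → ZMod r) i = 0 := f.2
  have key : ∀ i k j, ((zz (i, k) : Y) : Equiv.Perm (Fin 5))⁻¹ j = tab i k j := by decide
  ext j
  simp only [AddSubmonoidClass.coe_finsetSum, Finset.sum_apply, rho_apply,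
    Fintype.sum_prod_type, key]
  simp only [Submodule.coe_smul, Pi.smul_apply, smul_eq_mul]
  generalize (f : Fin 5 → ZMod r) = F at *
  rw [Fin.sum_univ_five] at hf
  fin_cases j <;> simp [Fin.sum_univ_five, Fin.sum_univ_four, tab] <;> linear_combination 3 * hf

end

section
variable {r : ℕ} [Fact r.Prime]
    {W : Type*} [AddCommGroup W] [Module (ZMod r) W]
    (ρ : Representation (ZMod r) Y W)

lemma five_ne {r : ℕ} (hr : r.Prime) (hr5 : r ≠ 5) : (5 : ZMod r) ≠ 0 := by
  intro h
  have : ((5 : ℕ) : ZMod r) = 0 := by exact_mod_cast h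
  rw [ZMod.natCast_eq_zero_iff] at this
  exact hr5 ((Nat.prime_dvd_prime_iff_eq hr Nat.prime_five).1 this)

lemma two_ne {r : ℕ} (hr : r.Prime) (hr2 : r ≠ 2) : (2 : ZMod r) ≠ 0 := by
  intro h
  have : ((2 : ℕ) : ZMod r) = 0 := by exact_mod_cast h
  rw [ZMod.natCast_eq_zero_iff] at this
  exact hr2 ((Nat.prime_dvd_prime_iff_eq hr Nat.prime_two).1 this)

lemma V_eig {k m : ZMod r} (hmk : k ≠ m) (z : V r) (h : k • z = m • z) : z = 0 := by
  ext i
  have h1 : k * (z : Fin 5 → ZMod r) i = m * (z : Fin 5 → ZMod r) i :=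
    congrFun (congrArg Subtype.val h) i
  by_contra h2
  exact hmk (mul_right_cancel₀ h2 h1)

lemma eig
    (n : ℕ) (c : ℕ → Submodule (ZMod r) W)
    (h0 : c 0 = ⊥) (hn : c n = ⊤)
    (hinv : ∀ i : ℕ, ∀ σ : Y, ∀ x ∈ c i, ρ σ x ∈ c i)
    (hfactors : ∀ i < n,
      ∃ e : (c (i + 1) ⧸ (c i).comap (c (i + 1)).subtype) ≃ₗ[ZMod r] V r,
        ∀ σ : Y, ∀ x y : c (i + 1),
          (x : W) = ρ σ y →
          e (Submodule.Quotient.mk x) =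
            rho r (σ : Equiv.Perm (Fin 5)) (e (Submodule.Quotient.mk y)))
    {ι : Type*} [Fintype ι] (a : ι → Y) (m k : ZMod r) (hmk : k ≠ m)
    (hV : ∀ f : V r, ∑ i, rho r (a i : Equiv.Perm (Fin 5)) f = m • f)
    (u : W) (hu : ∑ i, ρ (a i) u = k • u) : u = 0 := by
  have step : ∀ i ≤ n, u ∈ c (n - i) := by
    intro i
    induction i with
    | zero => intro _; simp [hn]
    | succ i ih =>
      intro hi
      have h1 := ih (by omega)
      obtain ⟨j, hj⟩ : ∃ j, j = n - (i + 1) := ⟨_, rfl⟩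
      rw [← hj]
      rw [show n - i = j + 1 by omega] at h1
      obtain ⟨e, he⟩ := hfactors j (by omega)
      let y : c (j + 1) := ⟨u, h1⟩
      let x : ι → c (j + 1) := fun i => ⟨ρ (a i) u, hinv _ _ _ h1⟩
      have hx : ∑ i, x i = k • y := by
        apply Subtype.ext
        simpa [x, y, AddSubmonoidClass.coe_finsetSum] using hu
      have h2 : e (Submodule.Quotient.mk (∑ i, x i)) = m • e (Submodule.Quotient.mk y) := by
        rw [← hV]
        rw [← Submodule.mkQ_apply, map_sum, map_sum]
        exact Finset.sum_congr rfl fun i _ => he (a i) (x i) y rfl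
      rw [hx, Submodule.Quotient.mk_smul, map_smul] at h2
      have h3 := V_eig hmk _ h2
      rw [LinearEquiv.map_eq_zero_iff, Submodule.Quotient.mk_eq_zero] at h3
      exact h3
  simpa [h0] using step n le_rfl

lemma c5_zero
    (n : ℕ) (c : ℕ → Submodule (ZMod r) W)
    (h0 : c 0 = ⊥) (hn : c n = ⊤)
    (hinv : ∀ i : ℕ, ∀ σ : Y, ∀ x ∈ c i, ρ σ x ∈ c i)
    (hfactors : ∀ i < n,
      ∃ e : (c (i + 1) ⧸ (c i).comap (c (i + 1)).subtype) ≃ₗ[ZMod r] V r,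
        ∀ σ : Y, ∀ x y : c (i + 1),
          (x : W) = ρ σ y →
          e (Submodule.Quotient.mk x) =
            rho r (σ : Equiv.Perm (Fin 5)) (e (Submodule.Quotient.mk y)))
    (hr5 : r ≠ 5) (w : W) : ∑ i, ρ (gg i) w = 0 := by
  refine eig ρ n c h0 hn hinv hfactors gg 0 5 (five_ne (Fact.out : r.Prime) hr5) V_c5 _ ?_
  have h : ∀ i, ρ (gg i) (∑ j, ρ (gg j) w) = ∑ j, ρ (gg j) w := by
    intro i
    have key : ∀ i j, gg i * gg j = gg (i + j) := by decide
    rw [map_sum]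
    have : ∀ j, ρ (gg i) (ρ (gg j) w) = ρ (gg (Equiv.addLeft i j)) w := by
      intro j
      rw [Equiv.coe_addLeft, ← key, map_mul]; rfl
    simp only [this]
    exact Equiv.sum_comp (Equiv.addLeft i) (fun j => ρ (gg j) w)
  simp only [h, Finset.sum_const, Finset.card_univ, Fintype.card_fin]
  rw [← Nat.cast_smul_eq_nsmul (ZMod r)]
  norm_num

end

lemma trel {r : ℕ} [Fact r.Prime] (hr2 : r ≠ 2)
    {W : Type*} [AddCommGroup W] [Module (ZMod r) W]
    (ρ : Representation (ZMod r) Y W) (hc : ∀ w, ∑ i, ρ (gg i) w = 0)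
    (w : W) (hw : ∀ k, ρ (vv k) w = w) : ρ tt w = w := by
  have hF : ∀ (g h x y : Y), g * x * h = y → ρ g (ρ x (ρ h w)) = ρ y w := by
    rintro g h x y rfl; simp
  have hv : ∀ (k : Fin 4) (x y : Y), x = y * vv k → ρ x w = ρ y w := by
    rintro k x y rfl; simp [hw]
  have h2 : ∀ g h : Y, ρ (g * 1 * h) w + ρ (g * cc * h) w + ρ (g * cc ^ 2 * h) w
      + ρ (g * cc ^ 3 * h) w + ρ (g * cc ^ 4 * h) w = 0 := by
    intro g h
    have := congrArg (ρ g) (hc (ρ h w))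
    simpa [Fin.sum_univ_five, gg] using this
  have A := h2 1 1
  have B := h2 tinv tinv
  have C := h2 v1 1
  have D := h2 g16 tinv
  rw [hv 0 (1 * 1 * 1) 1 (by decide)] at A
  rw [hv 0 (tinv * 1 * tinv) tt (by decide), hv 1 (tinv * cc * tinv) (1 * cc * 1) (by decide),
    hv 0 (tinv * cc ^ 2 * tinv) (1 * cc ^ 3 * 1) (by decide),
    hv 2 (tinv * cc ^ 3 * tinv) (v1 * cc ^ 3 * 1) (by decide),
    hv 3 (tinv * cc ^ 4 * tinv) (v1 * cc * 1) (by decide)] at B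
  rw [hv 1 (v1 * 1 * 1) 1 (by decide)] at C
  rw [hv 3 (g16 * 1 * tinv) tt (by decide),
    hv 2 (g16 * cc * tinv) (v1 * cc ^ 4 * 1) (by decide),
    hv 3 (g16 * cc ^ 2 * tinv) (v1 * cc ^ 2 * 1) (by decide),
    hv 1 (g16 * cc ^ 3 * tinv) (1 * cc ^ 2 * 1) (by decide),
    hv 0 (g16 * cc ^ 4 * tinv) (1 * cc ^ 4 * 1) (by decide)] at D
  have h : (2 : ZMod r) • (ρ tt w - ρ 1 w) = 0 := by
    rw [two_smul]
    have := congrArg₂ (· - ·) (congrArg₂ (· + ·) B D) (congrArg₂ (· + ·) A C)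
    simp only [add_zero, sub_zero] at this
    rw [← this]
    abel
  have h2 := two_ne (Fact.out : r.Prime) hr2
  rw [smul_eq_zero, or_iff_right h2, sub_eq_zero] at h
  simpa using h

section
variable {r : ℕ} {W : Type*} [AddCommGroup W] [Module (ZMod r) W]
    (ρ : Representation (ZMod r) Y W)

/-- Sum over the Klein four group fixing `0`. -/
def EE : Module.End (ZMod r) W := ∑ k, ρ (vv k)

lemma EE_v (k : Fin 4) : EE ρ * ρ (vv k) = EE ρ := by
  simp only [EE, Fin.sum_univ_four, add_mul, ← map_mul]
  fin_cases k
  · simp [show vv 0 = 1 from rfl]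
  · change ρ (vv 0 * vv 1) + ρ (vv 1 * vv 1) + ρ (vv 2 * vv 1) + ρ (vv 3 * vv 1) = _
    rw [show vv 0 * vv 1 = vv 1 by decide, show vv 1 * vv 1 = vv 0 by decide,
      show vv 2 * vv 1 = vv 3 by decide, show vv 3 * vv 1 = vv 2 by decide]
    abel
  · change ρ (vv 0 * vv 2) + ρ (vv 1 * vv 2) + ρ (vv 2 * vv 2) + ρ (vv 3 * vv 2) = _
    rw [show vv 0 * vv 2 = vv 2 by decide, show vv 1 * vv 2 = vv 3 by decide,
      show vv 2 * vv 2 = vv 0 by decide, show vv 3 * vv 2 = vv 1 by decide]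
    abel
  · change ρ (vv 0 * vv 3) + ρ (vv 1 * vv 3) + ρ (vv 2 * vv 3) + ρ (vv 3 * vv 3) = _
    rw [show vv 0 * vv 3 = vv 3 by decide, show vv 1 * vv 3 = vv 2 by decide,
      show vv 2 * vv 3 = vv 1 by decide, show vv 3 * vv 3 = vv 0 by decide]
    abel

lemma v_EE (k : Fin 4) : ρ (vv k) * EE ρ = EE ρ := by
  rw [← EE_v ρ k]
  nth_rewrite 1 [EE_v ρ k]
  have key : ∀ j k, vv k * vv j = vv j * vv k := by decide
  simp only [EE, Finset.mul_sum, Finset.sum_mul, ← map_mul, key]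

lemma EE_t : EE ρ * ρ tt = ρ tt * EE ρ := by
  simp only [EE, Fin.sum_univ_four, add_mul, mul_add, ← map_mul]
  rw [show vv 0 * tt = tt * vv 0 by decide, show vv 1 * tt = tt * vv 2 by decide,
    show vv 2 * tt = tt * vv 3 by decide, show vv 3 * tt = tt * vv 1 by decide]
  abel

lemma EE_sq : EE ρ * EE ρ = (4 : ZMod r) • EE ρ := by
  nth_rewrite 2 [EE]
  simp only [Finset.mul_sum, EE_v, Finset.sum_const, Finset.card_univ, Fintype.card_fin]
  rw [← Nat.cast_smul_eq_nsmul (ZMod r)]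
  norm_num

lemma stab_EE (ht : ρ tt * EE ρ = EE ρ) (a : Y) (ha : (a : Equiv.Perm (Fin 5)) 0 = 0) :
    ρ a * EE ρ = EE ρ ∧ EE ρ * ρ a = EE ρ := by
  obtain ⟨j, k, rfl⟩ := stab_form a ha
  have ht2 : EE ρ * ρ tt = EE ρ := (EE_t ρ).trans ht
  have h1 : ∀ j : ℕ, ρ (tt ^ j) * EE ρ = EE ρ := by
    intro j
    induction j with
    | zero => simp
    | succ j ih => rw [pow_succ, map_mul, mul_assoc, ht, ih]
  have h2 : ∀ j : ℕ, EE ρ * ρ (tt ^ j) = EE ρ := by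
    intro j
    induction j with
    | zero => simp
    | succ j ih => rw [pow_succ, map_mul, ← mul_assoc, ih, ht2]
  constructor
  · rw [map_mul, mul_assoc, v_EE, h1]
  · rw [map_mul, ← mul_assoc, h2, EE_v]

/-- The averaged projection. -/
def PP (π : Module.End (ZMod r) W) : Module.End (ZMod r) W :=
  ∑ i, ρ (gg i) * (EE ρ * π * EE ρ) * ρ (gg i)⁻¹

lemma gg_zero (i : Fin 5) : ((gg i : Y) : Equiv.Perm (Fin 5)) 0 = i := cpow0 i

lemma PP_comm (ht : ρ tt * EE ρ = EE ρ) (π : Module.End (ZMod r) W) (σ : Y) : ρ σ * PP ρ π = PP ρ π * ρ σ := by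
  rw [PP, Finset.mul_sum, Finset.sum_mul,
    ← Equiv.sum_comp (σ : Equiv.Perm (Fin 5))
      (fun i => ρ (gg i) * (EE ρ * π * EE ρ) * ρ (gg i)⁻¹ * ρ σ)]
  refine Finset.sum_congr rfl fun i _ => ?_
  set j := (σ : Equiv.Perm (Fin 5)) i with hj
  obtain ⟨a, ha⟩ : ∃ a, a = (gg j)⁻¹ * σ * gg i := ⟨_, rfl⟩
  have ha0 : (a : Equiv.Perm (Fin 5)) 0 = 0 := by
    rw [ha]
    simp only [Subgroup.coe_mul, Subgroup.coe_inv, Equiv.Perm.mul_apply, gg_zero]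
    rw [Equiv.Perm.inv_eq_iff_eq, gg_zero]
  obtain ⟨h1, h2⟩ := stab_EE ρ ht a ha0
  have e1 : σ * gg i = gg j * a := by rw [ha]; group
  have e2 : (gg j)⁻¹ * σ = a * (gg i)⁻¹ := by rw [ha]; group
  calc ρ σ * (ρ (gg i) * (EE ρ * π * EE ρ) * ρ (gg i)⁻¹)
      = ρ (σ * gg i) * (EE ρ * π * EE ρ) * ρ (gg i)⁻¹ := by simp only [map_mul, mul_assoc]
    _ = ρ (gg j) * ((ρ a * EE ρ) * π * EE ρ) * ρ (gg i)⁻¹ := by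
      rw [e1]; simp only [map_mul, mul_assoc]
    _ = ρ (gg j) * (EE ρ * π * (EE ρ * ρ a)) * ρ (gg i)⁻¹ := by rw [h1, h2]
    _ = ρ (gg j) * (EE ρ * π * EE ρ) * ρ (a * (gg i)⁻¹) := by simp only [map_mul, mul_assoc]
    _ = ρ (gg j) * (EE ρ * π * EE ρ) * ρ (gg j)⁻¹ * ρ σ := by
      rw [← e2]; simp only [map_mul, mul_assoc]

lemma EE_mem (U : Submodule (ZMod r) W)
    (hU : ∀ σ : Y, ∀ x ∈ U, ρ σ x ∈ U) {x : W} (hx : x ∈ U) : EE ρ x ∈ U := by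
  rw [EE, LinearMap.sum_apply]
  exact U.sum_mem fun k _ => hU _ _ hx

lemma PP_mem (U : Submodule (ZMod r) W)
    (hU : ∀ σ : Y, ∀ x ∈ U, ρ σ x ∈ U) (π : Module.End (ZMod r) W) (hπ : ∀ x, π x ∈ U) (x : W) : PP ρ π x ∈ U := by
  rw [PP, LinearMap.sum_apply]
  refine U.sum_mem fun i _ => ?_
  exact hU _ _ (EE_mem ρ U hU (hπ _))

lemma PP_self (U : Submodule (ZMod r) W)
    (hU : ∀ σ : Y, ∀ x ∈ U, ρ σ x ∈ U) (π : Module.End (ZMod r) W) (hπ : ∀ x ∈ U, π x = x) (x : W) (hx : x ∈ U) :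
    PP ρ π x = (4 : ZMod r) • ∑ p, ρ (zz p) x := by
  rw [PP, LinearMap.sum_apply, Fintype.sum_prod_type, Finset.smul_sum]
  refine Finset.sum_congr rfl fun i _ => ?_
  have h1 : π (EE ρ (ρ (gg i)⁻¹ x)) = EE ρ (ρ (gg i)⁻¹ x) :=
    hπ _ (EE_mem ρ U hU (hU _ _ hx))
  have h2 : EE ρ (EE ρ (ρ (gg i)⁻¹ x)) = (4 : ZMod r) • EE ρ (ρ (gg i)⁻¹ x) :=
    LinearMap.congr_fun (EE_sq ρ) _
  calc _ = ρ (gg i) (EE ρ (π (EE ρ (ρ (gg i)⁻¹ x)))) := rfl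
    _ = (4 : ZMod r) • ρ (gg i) (EE ρ (ρ (gg i)⁻¹ x)) := by rw [h1, h2, map_smul]
    _ = _ := by
      congr 1
      rw [EE, LinearMap.sum_apply, map_sum]
      refine Finset.sum_congr rfl fun k _ => ?_
      simp only [zz, map_mul]
      rfl

end

end DPM
/-- Lemma 2.2 (Astill–Parker–Waldecker): for an odd prime `r ≠ 5`, any finite-dimensional
`Alt(5)`-module over `ZMod r` all of whose composition factors (along some invariant
filtration) are isomorphic to the deleted permutation module `V` is completely
reducible: every invariant subspace has an invariant direct complement. -/
theorem completely_reducible_of_all_factors_V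
    (r : ℕ) (hr : r.Prime) (hodd : Odd r) (hr5 : r ≠ 5)
    (W : Type*) [AddCommGroup W] [Module (ZMod r) W] [Module.Finite (ZMod r) W]
    (ρ : Representation (ZMod r) (alternatingGroup (Fin 5)) W)
    (n : ℕ) (c : ℕ → Submodule (ZMod r) W)
    (hmono : Monotone c) (h0 : c 0 = ⊥) (hn : c n = ⊤)
    (hinv : ∀ i : ℕ, ∀ σ : alternatingGroup (Fin 5), ∀ x ∈ c i, ρ σ x ∈ c i)
    (hfactors : ∀ i < n,
      ∃ e : (c (i + 1) ⧸ (c i).comap (c (i + 1)).subtype) ≃ₗ[ZMod r] V r,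
        ∀ σ : alternatingGroup (Fin 5), ∀ x y : c (i + 1),
          (x : W) = ρ σ y →
          e (Submodule.Quotient.mk x) =
            rho r (σ : Equiv.Perm (Fin 5)) (e (Submodule.Quotient.mk y))) :
    ∀ U : Submodule (ZMod r) W,
      (∀ σ : alternatingGroup (Fin 5), ∀ x ∈ U, ρ σ x ∈ U) →
      ∃ U' : Submodule (ZMod r) W,
        (∀ σ : alternatingGroup (Fin 5), ∀ x ∈ U', ρ σ x ∈ U') ∧ IsCompl U U' := by
  intro U hU
  have : Fact r.Prime := ⟨hr⟩
  have hr2 : r ≠ 2 := by rintro rfl; exact absurd hodd (by decide)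
  have hc := DPM.c5_zero ρ n c h0 hn hinv hfactors hr5
  have ht : ρ DPM.tt * DPM.EE ρ = DPM.EE ρ := by
    ext w
    exact DPM.trel hr2 ρ hc _ fun k => LinearMap.congr_fun (DPM.v_EE ρ k) w
  have h4 : (4 : ZMod r) ≠ 0 := by
    have := mul_ne_zero (DPM.two_ne hr hr2) (DPM.two_ne hr hr2)
    norm_num at this
    exact this
  have hz : ∀ u : W, ∑ p, ρ (DPM.zz p) u = 0 → u = 0 := by
    intro u hu
    exact DPM.eig ρ n c h0 hn hinv hfactors DPM.zz 5 0 (DPM.five_ne hr hr5).symm DPM.V_z u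
      (by rw [hu, zero_smul])
  obtain ⟨π₀, hπ₀⟩ := U.subtype.exists_leftInverse_of_injective U.ker_subtype
  let π : Module.End (ZMod r) W := U.subtype ∘ₗ π₀
  have hπ1 : ∀ x, π x ∈ U := fun x => (π₀ x).2
  have hπ2 : ∀ x ∈ U, π x = x := fun x hx =>
    congrArg Subtype.val (LinearMap.congr_fun hπ₀ ⟨x, hx⟩)
  have hP1 := DPM.PP_mem ρ U hU π hπ1
  have hP2 := DPM.PP_self ρ U hU π hπ2
  have hP3 := DPM.PP_comm ρ ht π
  have hinj : ∀ x ∈ U, DPM.PP ρ π x = 0 → x = 0 := by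
    intro x hx h
    rw [hP2 x hx, smul_eq_zero, or_iff_right h4] at h
    exact hz x h
  let Q : U →ₗ[ZMod r] U := (DPM.PP ρ π).restrict fun x _ => hP1 x
  have hQ : Function.Injective Q := by
    rw [injective_iff_map_eq_zero]
    intro x hx
    exact Subtype.ext (hinj x x.2 (congrArg Subtype.val hx))
  have hQs : Function.Surjective Q := LinearMap.injective_iff_surjective.1 hQ
  refine ⟨LinearMap.ker (DPM.PP ρ π), ?_, ?_, ?_⟩
  · intro σ x hx
    rw [LinearMap.mem_ker] at hx ⊢
    have := LinearMap.congr_fun (hP3 σ) x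
    rw [Module.End.mul_apply, Module.End.mul_apply, hx, map_zero] at this
    exact this.symm
  · rw [Submodule.disjoint_def]
    exact hinj
  · rw [codisjoint_iff, eq_top_iff]
    intro x _
    obtain ⟨y, hy⟩ := hQs ⟨DPM.PP ρ π x, hP1 x⟩
    have hyx : DPM.PP ρ π y = DPM.PP ρ π x := congrArg Subtype.val hy
    refine Submodule.mem_sup.2 ⟨y, y.2, x - y, ?_, by abel⟩
    rw [LinearMap.mem_ker, map_sub, hyx, sub_self]
end

section
/- The alternating group on 6 letters, alternatingGroup (Fin 6), admits no injective group homomorphism into the general linear group GL₄(ℤ/9ℤ) of invertible 4×4 matrices over ZMod 9. Equivalently, Alt(6) is not isomorphic to any subgroup of GL₄(ℤ/9ℤ). -/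
/-- The commuting algebra of a nilpotent operator of Jordan type (3,1). -/
lemma jordan_aux {K V : Type*} [Field K] [AddCommGroup V] [Module K V]
    (hV : Module.finrank K V = 4) (X Y : V →ₗ[K] V)
    (hX3 : ∀ v, X (X (X v)) = 0) (hX2 : ∃ e, X (X e) ≠ 0)
    (hc : ∀ v, Y (X v) = X (Y v)) (hY3 : ∀ v, Y (Y (Y v)) = 0) :
    ∃ β c : K, (∀ v, X (Y v) = β • X (X v)) ∧ (∀ v, Y (Y v) = c • X (X v)) := by
  obtain ⟨e, he⟩ := hX2
  have hfin : FiniteDimensional K V := Module.finite_of_finrank_pos (by omega)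
  have key : ∀ a b c : K, a • e + b • X e + c • X (X e) = 0 → a = 0 ∧ b = 0 ∧ c = 0 := by
    intro a b c h
    have h2 := congrArg (fun v => X (X v)) h
    simp only [map_add, map_smul, hX3, map_zero, smul_zero, add_zero] at h2
    have ha : a = 0 := (smul_eq_zero.mp h2).resolve_right he
    subst ha
    have h1 := congrArg X h
    simp only [map_add, map_smul, hX3, map_zero, smul_zero, add_zero, zero_smul, zero_add] at h1
    have hb : b = 0 := (smul_eq_zero.mp h1).resolve_right he
    subst hb
    simp only [zero_smul, zero_add] at h
    exact ⟨rfl, rfl, (smul_eq_zero.mp h).resolve_right he⟩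
  have hli : LinearIndependent K ![e, X e, X (X e)] := by
    rw [Fintype.linearIndependent_iff]
    intro g hg
    simp only [Fin.sum_univ_three, Matrix.cons_val] at hg
    obtain ⟨h0, h1, h2⟩ := key _ _ _ hg
    intro i
    fin_cases i <;> assumption
  have hex : ∃ k0, k0 ∉ Submodule.span K (Set.range ![e, X e, X (X e)]) := by
    by_contra hcon
    push Not at hcon
    have htop : Submodule.span K (Set.range ![e, X e, X (X e)]) = ⊤ := by
      rw [eq_top_iff]; intro v _; exact hcon v
    have := finrank_span_eq_card hli
    rw [htop, finrank_top, hV] at this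
    simp at this
  obtain ⟨k0, hk0⟩ := hex
  have hli4 : LinearIndependent K ![k0, e, X e, X (X e)] :=
    linearIndependent_finCons.mpr ⟨hli, hk0⟩
  have hspan := hli4.span_eq_top_of_card_eq_finrank (by simp [hV])
  have hs : ∀ v, ∃ d a b c : K, v = d • k0 + a • e + b • X e + c • X (X e) := by
    intro v
    have hv : v ∈ Submodule.span K (Set.range ![k0, e, X e, X (X e)]) := by
      rw [hspan]; trivial
    obtain ⟨g, hg⟩ := (Submodule.mem_span_range_iff_exists_fun K).mp hv
    simp only [Fin.sum_univ_four, Matrix.cons_val] at hg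
    exact ⟨_, _, _, _, hg.symm⟩
  have hind : ∀ d a b c : K, d • k0 + a • e + b • X e + c • X (X e) = 0 →
      d = 0 ∧ a = 0 ∧ b = 0 ∧ c = 0 := by
    intro d a b c h
    have := Fintype.linearIndependent_iff.mp hli4 ![d, a, b, c]
      (by simpa only [Fin.sum_univ_four, Matrix.cons_val] using h)
    exact ⟨this 0, this 1, this 2, this 3⟩
  -- modify `k0` to a vector in the kernel of `X`
  obtain ⟨k, hXk, hs, hind⟩ : ∃ k, X k = 0 ∧
      (∀ v, ∃ d a b c : K, v = d • k + a • e + b • X e + c • X (X e)) ∧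
      (∀ d a b c : K, d • k + a • e + b • X e + c • X (X e) = 0 →
        d = 0 ∧ a = 0 ∧ b = 0 ∧ c = 0) := by
    obtain ⟨d, a, b, c, hk⟩ := hs (X k0)
    have h1 := congrArg X hk
    have h2 := congrArg X h1
    simp only [map_add, map_smul, hX3, smul_zero, add_zero] at h1 h2
    have hd : d = 0 := by
      rw [h1, hk] at h2
      have h3 : (d * d * d) • k0 + (d * d * a) • e + (d * d * b + d * a) • X e
          + (d * d * c + d * b + a) • X (X e) = 0 := by
        rw [h2]; module
      have := (hind _ _ _ _ h3).1
      simpa using this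
    subst hd
    have ha : a = 0 := by
      simp only [zero_smul, zero_add] at h2
      exact (smul_eq_zero.mp h2.symm).resolve_right he
    subst ha
    refine ⟨k0 - b • e - c • X e, ?_, ?_, ?_⟩
    · simp only [map_sub, map_smul, hk]; module
    · intro v
      obtain ⟨d, a', b', c', hv⟩ := hs v
      exact ⟨d, a' + d * b, b' + d * c, c', by rw [hv]; module⟩
    · intro d a' b' c' h
      obtain ⟨h1, h2, h3, h4⟩ := hind d (a' - d * b) (b' - d * c) c' (by rw [← h]; module)
      subst h1
      exact ⟨rfl, by simpa using h2, by simpa using h3, h4⟩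
  obtain ⟨δ, y0, β, γ, hYe⟩ := hs (Y e)
  have hYx : Y (X e) = y0 • X e + β • X (X e) := by
    rw [hc, hYe]; simp only [map_add, map_smul, hX3, hXk]; module
  have hYu : Y (X (X e)) = y0 • X (X e) := by
    rw [hc, hYx]; simp only [map_add, map_smul, hX3]; module
  have hy0 : y0 = 0 := by
    have h := hY3 (X (X e))
    simp only [hYu, map_smul, smul_smul] at h
    have := (smul_eq_zero.mp h).resolve_right he
    simpa using this
  subst hy0
  obtain ⟨d, a, b, c, hYk⟩ := hs (Y k)
  have hXYk : X (Y k) = 0 := by rw [← hc, hXk, map_zero]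
  have hab : a = 0 ∧ b = 0 := by
    have h := hXYk
    rw [hYk] at h
    simp only [map_add, map_smul, hX3, hXk] at h
    obtain ⟨h1, h2, h3, h4⟩ := hind 0 0 a b (by rw [← h]; module)
    exact ⟨h3, h4⟩
  obtain ⟨rfl, rfl⟩ := hab
  have hd : d = 0 := by
    have h := hY3 k
    simp only [hYk, map_add, map_smul, hYu] at h
    obtain ⟨h1, -⟩ := hind (d * d * d) 0 0 (d * d * c) (by rw [← h]; module)
    simpa using h1
  subst hd
  refine ⟨β, β * β + δ * c, ?_, ?_⟩
  · intro v
    obtain ⟨d', a', b', c', rfl⟩ := hs v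
    simp only [map_add, map_smul, hYe, hYk, hYx, hYu, hX3, hXk, map_zero]
    module
  · intro v
    obtain ⟨d', a', b', c', rfl⟩ := hs v
    simp only [map_add, map_smul, hYe, hYk, hYx, hYu, hX3, hXk, map_zero]
    module

/-- Matrix version of `jordan_aux`. -/
lemma jordan_matrix (X Y : Matrix (Fin 4) (Fin 4) (ZMod 3))
    (hX3 : X * X * X = 0) (hX2 : X * X ≠ 0) (hc : Y * X = X * Y) (hY3 : Y * Y * Y = 0) :
    ∃ β c : ZMod 3, X * Y = β • (X * X) ∧ Y * Y = c • (X * X) := by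
  have : Fact (Nat.Prime 3) := ⟨by norm_num⟩
  have hmul : ∀ (M N : Matrix (Fin 4) (Fin 4) (ZMod 3)) v,
      M.toLin' (N.toLin' v) = (M * N).toLin' v := by
    intro M N v; simp
  obtain ⟨β, c, h1, h2⟩ := jordan_aux (K := ZMod 3) (V := Fin 4 → ZMod 3) (by simp)
    X.toLin' Y.toLin'
    (by intro v; rw [hmul, hmul, hX3]; simp)
    (by
      by_contra hcon
      push Not at hcon
      apply hX2
      apply Matrix.toLin'.injective
      ext1 v
      ext i
      simp only [hmul] at hcon
      simp [hcon, -Matrix.toLin'_mul])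
    (by intro v; rw [hmul, hmul, hc])
    (by intro v; rw [hmul, hmul, hY3]; simp)
  refine ⟨β, c, ?_, ?_⟩
  · apply Matrix.toLin'.injective
    apply LinearMap.ext
    intro v
    rw [← hmul, h1, hmul, map_smul]; rfl
  · apply Matrix.toLin'.injective
    apply LinearMap.ext
    intro v
    rw [← hmul, h2, hmul, map_smul]; rfl

/-- Reduction modulo 3 of 4 by 4 matrices over `ZMod 9`. -/
noncomputable def redThree :
    Matrix (Fin 4) (Fin 4) (ZMod 9) →+* Matrix (Fin 4) (Fin 4) (ZMod 3) :=
  (ZMod.castHom (show 3 ∣ 9 by norm_num) (ZMod 3)).mapMatrix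

lemma redThree_zero (M : Matrix (Fin 4) (Fin 4) (ZMod 9)) (h : redThree M = 0) :
    ∃ P, M = 3 * P := by
  have h0 : ∀ x : ZMod 9, ZMod.castHom (show 3 ∣ 9 by norm_num) (ZMod 3) x = 0 →
      ∃ y, x = 3 * y := by decide
  have h1 : ∀ i j, ∃ y, M i j = 3 * y := fun i j => h0 _ (by
    have := congrFun (congrFun h i) j
    simpa [redThree] using this)
  choose P hP using h1
  refine ⟨Matrix.of P, ?_⟩
  ext i j
  rw [hP, show (3 : Matrix (Fin 4) (Fin 4) (ZMod 9)) = (3 : ℕ) by norm_num, ← nsmul_eq_mul]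
  simp

lemma redThree_of_three (M : Matrix (Fin 4) (Fin 4) (ZMod 9)) (h : 3 * M = 0) :
    redThree M = 0 := by
  have h0 : ∀ x : ZMod 9, 3 * x = 0 →
      ZMod.castHom (show 3 ∣ 9 by norm_num) (ZMod 3) x = 0 := by decide
  rw [show (3 : Matrix (Fin 4) (Fin 4) (ZMod 9)) = (3 : ℕ) by norm_num, ← nsmul_eq_mul] at h
  ext i j
  have := congrFun (congrFun h i) j
  simpa [redThree] using h0 (M i j) (by simpa using this)

lemma nine_zero (M : Matrix (Fin 4) (Fin 4) (ZMod 9)) : 9 * M = 0 := by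
  rw [show (9 : Matrix (Fin 4) (Fin 4) (ZMod 9)) = (9 : ℕ) by norm_num, ← nsmul_eq_mul]
  ext i j
  have h0 : ∀ x : ZMod 9, 9 * x = 0 := by decide
  simpa using h0 (M i j)

lemma three_zero (M : Matrix (Fin 4) (Fin 4) (ZMod 3)) : 3 * M = 0 := by
  rw [show (3 : Matrix (Fin 4) (Fin 4) (ZMod 3)) = (3 : ℕ) by norm_num, ← nsmul_eq_mul]
  ext i j
  have h0 : ∀ x : ZMod 3, 3 * x = 0 := by decide
  simpa using h0 (M i j)

/-- An involution which is trivial mod 3 is trivial. -/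
lemma involution_red (S : Matrix (Fin 4) (Fin 4) (ZMod 9)) (h2 : S * S = 1)
    (h : redThree S = 1) : S = 1 := by
  obtain ⟨N, hN⟩ := redThree_zero (S - 1) (by simp [h])
  have hS : S = 1 + 3 * N := by rw [← hN]; abel
  have h3 := nine_zero N
  have h4 := nine_zero (N * N)
  have h5 : (6 : Matrix (Fin 4) (Fin 4) (ZMod 9)) * N = 0 := by
    have : S * S - 1 = 6 * N + 9 * (N * N) := by rw [hS]; noncomm_ring
    rw [h2, h4] at this
    simpa using this.symm
  have h6 : 3 * N = 9 * N - 6 * N := by noncomm_ring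
  rw [hS, h6, h3, h5]; simp

/-- The key obstruction to lifting. -/
lemma no_lift (A B : Matrix (Fin 4) (Fin 4) (ZMod 9)) (hA : A * A * A = 1)
    (hB : B * B * B = 1) (hAB : A * B = B * A)
    (h1 : (redThree A - 1) * (redThree B - 1) = 0)
    (h2 : (redThree B - 1) * (redThree B - 1) = (redThree A - 1) * (redThree A - 1))
    (hX3' : (redThree A - 1) * (redThree A - 1) * (redThree A - 1) = 0) :
    (redThree A - 1) * (redThree A - 1) = 0 := by
  obtain ⟨X, rfl⟩ : ∃ X, A = X + 1 := ⟨A - 1, by abel⟩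
  obtain ⟨Y, rfl⟩ : ∃ Y, B = Y + 1 := ⟨B - 1, by abel⟩
  simp only [map_add, map_one, add_sub_cancel_right] at *
  have hXY : X * Y = Y * X := by
    have : (X + 1) * (Y + 1) - (Y + 1) * (X + 1) = X * Y - Y * X := by noncomm_ring
    rw [hAB, sub_self] at this
    exact (sub_eq_zero.mp this.symm)
  have hX3 : X * X * X + 3 * (X * X) + 3 * X = 0 := by
    have : (X + 1) * (X + 1) * (X + 1) - 1 = X * X * X + 3 * (X * X) + 3 * X := by noncomm_ring
    rw [hA, sub_self] at this
    exact this.symm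
  have hY3 : Y * Y * Y + 3 * (Y * Y) + 3 * Y = 0 := by
    have : (Y + 1) * (Y + 1) * (Y + 1) - 1 = Y * Y * Y + 3 * (Y * Y) + 3 * Y := by noncomm_ring
    rw [hB, sub_self] at this
    exact this.symm
  obtain ⟨P, hP⟩ := redThree_zero (X * Y) (by rw [map_mul, h1])
  obtain ⟨Q, hQ⟩ := redThree_zero (Y * Y - X * X) (by rw [map_sub, map_mul, map_mul, h2, sub_self])
  have E0 := redThree_of_three (P * Y - Y * P) (by
    have : 3 * (P * Y - Y * P) = (3 * P) * Y - Y * (3 * P) := by noncomm_ring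
    rw [this, ← hP, ← mul_assoc Y X Y, ← hXY, sub_self])
  have E1 := redThree_of_three (X * P + Y + Y * Y + Q * Y) (by
    have : 3 * (X * P + Y + Y * Y + Q * Y)
      = X * (3 * P) + 3 * Y + 3 * (Y * Y) + (3 * Q) * Y := by noncomm_ring
    rw [this, ← hP, ← hQ, ← hY3]; noncomm_ring)
  have E2 := redThree_of_three (P * Y + X + X * X - Q * X) (by
    have : 3 * (P * Y + X + X * X - Q * X)
      = (3 * P) * Y + 3 * X + 3 * (X * X) - (3 * Q) * X := by noncomm_ring
    have h' : Y * Y * X = X * Y * Y := by rw [mul_assoc, ← hXY, ← mul_assoc, ← hXY]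
    rw [this, ← hP, ← hQ, ← hX3, sub_mul, h']; noncomm_ring)
  have hXY' : redThree X * redThree Y = redThree Y * redThree X := by
    rw [← map_mul, hXY, map_mul]
  simp only [map_add, map_sub, map_mul] at E0 E1 E2
  generalize redThree X = x at *
  generalize redThree Y = y at *
  generalize redThree P = p at *
  generalize redThree Q = q at *
  have F1 : x * x + q * (x * x) = 0 := by
    have h : (x * p + y + y * y + q * y) * y = 0 := by rw [E1, zero_mul]
    have h' : (x * p + y + y * y + q * y) * y
      = x * (p * y - y * p) + (x * y) * p + y * y + y * (y * y) + q * (y * y) := by noncomm_ring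
    rw [h', E0, h1, h2, ← mul_assoc y, ← hXY', h1] at h
    simpa using h
  have F2 : x * x - q * (x * x) = 0 := by
    have h : (p * y + x + x * x - q * x) * x = 0 := by rw [E2, zero_mul]
    have h' : (p * y + x + x * x - q * x) * x
      = p * (y * x) + x * x + x * x * x - q * (x * x) := by noncomm_ring
    rw [h', ← hXY', h1, hX3'] at h
    simpa using h
  have : x * x = 3 * (x * x) - ((x * x + q * (x * x)) + (x * x - q * (x * x))) := by noncomm_ring
  rw [this, F1, F2, three_zero]; simp

/-- If `Alt(4)` acts nontrivially then an element of order 3 is not quadratic. -/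
lemma not_quadratic (A S T U : Matrix (Fin 4) (Fin 4) (ZMod 3))
    (hS : S * S = 1) (hT : T * T = 1) (hU : U * U = 1)
    (hST : S * T = U) (hTS : T * S = U) (hSU : S * U = T) (hUS : U * S = T)
    (hTU : T * U = S) (hUT : U * T = S)
    (h1 : A * S = T * A) (h2 : A * T = U * A) (h3 : A * U = S * A)
    (hA : (A - 1) * (A - 1) = 0) : S = 1 := by
  have hN : 1 + A + A * A = 0 := by
    have : 1 + A + A * A = (A - 1) * (A - 1) + 3 * A := by noncomm_ring
    rw [this, hA, three_zero, add_zero]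
  have gen : ∀ S T U : Matrix (Fin 4) (Fin 4) (ZMod 3),
    S * S = 1 → T * T = 1 → U * U = 1 → S * T = U → T * S = U → S * U = T → U * S = T →
    T * U = S → U * T = S → A * S = T * A → A * T = U * A → A * U = S * A →
    1 + S - T - U = 0 := by
    intro S T U hS hT hU hST hTS hSU hUS hTU hUT h1 h2 h3
    have k1 : A * (1 + S - T - U) = (1 + T - U - S) * A := by
      simp only [mul_add, mul_sub, add_mul, sub_mul, h1, h2, h3, mul_one, one_mul]
    have k2 : A * (1 + T - U - S) = (1 + U - S - T) * A := by
      simp only [mul_add, mul_sub, add_mul, sub_mul, h1, h2, h3, mul_one, one_mul]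
    have o1 : (1 + S - T - U) * (1 + T - U - S) = 0 := by
      simp only [mul_add, mul_sub, add_mul, sub_mul, hS, hT, hU, hST, hTS, hSU, hUS, hTU, hUT,
        mul_one, one_mul]
      abel
    have o2 : (1 + S - T - U) * (1 + U - S - T) = 0 := by
      simp only [mul_add, mul_sub, add_mul, sub_mul, hS, hT, hU, hST, hTS, hSU, hUS, hTU, hUT,
        mul_one, one_mul]
      abel
    have o3 : (1 + S - T - U) * (1 + S - T - U) = (1 + S - T - U) + 3 * (1 + S - T - U) := by
      have : (1 + S - T - U) + 3 * (1 + S - T - U) = 4 * (1 + S - T - U) := by noncomm_ring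
      rw [this, show (4 : Matrix (Fin 4) (Fin 4) (ZMod 3)) = 1 + 1 + 1 + 1 by norm_num]
      simp only [mul_add, mul_sub, add_mul, sub_mul, hS, hT, hU, hST, hTS, hSU, hUS, hTU, hUT,
        mul_one, one_mul]
      abel
    rw [three_zero, add_zero] at o3
    have : (1 + S - T - U) * (1 + A + A * A) * (1 + S - T - U) = 0 := by rw [hN]; simp
    rw [mul_assoc, add_mul, add_mul, one_mul, mul_assoc A A, k1, ← mul_assoc A, k2, mul_add,
      mul_add, o3, ← mul_assoc, o1, ← mul_assoc, ← mul_assoc, o2] at this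
    simpa using this
  have g2 := gen T U S hT hU hS hTU hUT hTS hST hUS hSU h2 h3 h1
  have g3 := gen U S T hU hS hT hUS hSU hUT hTU hST hTS h3 h1 h2
  have : S = 1 + 3 * (S - 1) + ((1 + T - U - S) + (1 + U - S - T)) := by noncomm_ring
  rw [this, three_zero, g2, g3]; simp

/-- The matrix of an element under a homomorphism to `GL₄(ℤ/9ℤ)`. -/
def matHom (f : alternatingGroup (Fin 6) →* Matrix.GeneralLinearGroup (Fin 4) (ZMod 9)) :
    alternatingGroup (Fin 6) →* Matrix (Fin 4) (Fin 4) (ZMod 9) :=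
  (Units.coeHom _).comp f

lemma not_quadratic_hom
    (f : alternatingGroup (Fin 6) →* Matrix.GeneralLinearGroup (Fin 4) (ZMod 9))
    (hf : Function.Injective f) (a s t u : alternatingGroup (Fin 6))
    (hs1 : s ≠ 1) (hs : s * s = 1) (ht : t * t = 1) (hst : s * t = u) (hts : t * s = u)
    (h1 : a * s = t * a) (h2 : a * t = u * a) (h3 : a * u = s * a) :
    (redThree (matHom f a) - 1) * (redThree (matHom f a) - 1) ≠ 0 := by
  intro hA
  have hsu : s * u = t := by rw [← hst, ← mul_assoc, hs, one_mul]
  have hus : u * s = t := by rw [← hts, mul_assoc, hs, mul_one]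
  have hut : u * t = s := by rw [← hst, mul_assoc, ht, mul_one]
  have htu : t * u = s := by rw [← hts, ← mul_assoc, ht, one_mul]
  have hu : u * u = 1 := by
    nth_rewrite 1 [← hst]
    rw [mul_assoc, htu, hs]
  have tr : ∀ g h k l : alternatingGroup (Fin 6), g * h = k * l →
      redThree (matHom f g) * redThree (matHom f h)
        = redThree (matHom f k) * redThree (matHom f l) := by
    intro g h k l e
    rw [← map_mul, ← map_mul, e, map_mul, map_mul]
  have tr1 : ∀ g h k : alternatingGroup (Fin 6), g * h = k →
      redThree (matHom f g) * redThree (matHom f h) = redThree (matHom f k) := by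
    intro g h k e
    rw [← map_mul, ← map_mul, e]
  have tr0 : ∀ g h : alternatingGroup (Fin 6), g * h = 1 →
      redThree (matHom f g) * redThree (matHom f h) = 1 := by
    intro g h e
    rw [← map_mul, ← map_mul, e, map_one, map_one]
  have key := not_quadratic (redThree (matHom f a)) (redThree (matHom f s))
    (redThree (matHom f t)) (redThree (matHom f u)) (tr0 _ _ hs) (tr0 _ _ ht) (tr0 _ _ hu)
    (tr1 _ _ _ hst) (tr1 _ _ _ hts) (tr1 _ _ _ hsu) (tr1 _ _ _ hus) (tr1 _ _ _ htu)
    (tr1 _ _ _ hut) (tr _ _ _ _ h1) (tr _ _ _ _ h2) (tr _ _ _ _ h3) hA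
  have := involution_red (matHom f s) (by rw [← map_mul, hs, map_one]) key
  apply hs1
  apply hf
  rw [map_one]
  exact Units.ext this

lemma quad_calc (x y : Matrix (Fin 4) (Fin 4) (ZMod 3)) (β c q r : ZMod 3)
    (hx3 : x * x * x = 0) (hc : y * x = x * y)
    (h1 : x * y = β • (x * x)) (h2 : y * y = c • (x * x)) :
    x * (x + q • y + r • (x * x)) = (1 + q * β) • (x * x) ∧
    (x + q • y + r • (x * x)) * (x + q • y + r • (x * x))
      = (1 + 2 * q * β + q * q * c) • (x * x) := by
  have n1 : x * (x * x) = 0 := by rw [← mul_assoc, hx3]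
  have n2 : y * (x * x) = 0 := by
    rw [← mul_assoc, hc, h1, smul_mul_assoc, hx3, smul_zero]
  have n3 : x * x * y = 0 := by rw [mul_assoc, h1, mul_smul_comm, n1, smul_zero]
  have n4 : x * x * (x * x) = 0 := by rw [← mul_assoc, hx3, zero_mul]
  rw [h1] at hc
  constructor
  · simp only [mul_add, mul_smul_comm, n1, h1]
    module
  · simp only [mul_add, add_mul, mul_smul_comm, smul_mul_assoc, n1, n2, n3, n4, hx3, h1, h2, hc]
    module

lemma cases_three : ∀ β c : ZMod 3, c ≠ 0 → 1 + 2 * 1 * β + 1 * 1 * c ≠ 0 →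
    1 + 2 * 2 * β + 2 * 2 * c ≠ 0 →
    (β = 0 ∧ c = 1) ∨ (1 + 1 * β = 0 ∧ 1 + 2 * 1 * β + 1 * 1 * c = 1) ∨
      (1 + 2 * β = 0 ∧ 1 + 2 * 2 * β + 2 * 2 * c = 1) := by decide

lemma final_aux (F : alternatingGroup (Fin 6) →* Matrix (Fin 4) (Fin 4) (ZMod 9))
    (a b : alternatingGroup (Fin 6)) (ha : a * a * a = 1) (hb : b * b * b = 1)
    (hab : a * b = b * a)
    (qa : (redThree (F a) - 1) * (redThree (F a) - 1) ≠ 0)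
    (qb : (redThree (F b) - 1) * (redThree (F b) - 1) ≠ 0)
    (qab : (redThree (F (a * b)) - 1) * (redThree (F (a * b)) - 1) ≠ 0)
    (qabb : (redThree (F (a * b * b)) - 1) * (redThree (F (a * b * b)) - 1) ≠ 0) : False := by
  have cube : ∀ g, g * g * g = 1 →
      (redThree (F g) - 1) * (redThree (F g) - 1) * (redThree (F g) - 1) = 0 := by
    intro g hg
    have h : redThree (F g) * redThree (F g) * redThree (F g) = 1 := by
      simp only [← map_mul, hg, map_one]
    generalize redThree (F g) = m at *
    have : (m - 1) * (m - 1) * (m - 1) = m * m * m - 1 - 3 * (m * m - m) := by noncomm_ring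
    rw [this, h, three_zero]; simp
  have lift : ∀ g, g * g * g = 1 → a * g = g * a →
      (redThree (F a) - 1) * (redThree (F g) - 1) = 0 →
      (redThree (F g) - 1) * (redThree (F g) - 1)
        = (redThree (F a) - 1) * (redThree (F a) - 1) → False := by
    intro g hg hag e1 e2
    refine qa (no_lift (F a) (F g) ?_ ?_ ?_ e1 e2 (cube a ha))
    · simp only [← map_mul, ha, map_one]
    · simp only [← map_mul, hg, map_one]
    · simp only [← map_mul, hag]
  obtain ⟨x, hx⟩ : ∃ x, redThree (F a) = x + 1 := ⟨redThree (F a) - 1, by abel⟩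
  obtain ⟨y, hy⟩ : ∃ y, redThree (F b) = y + 1 := ⟨redThree (F b) - 1, by abel⟩
  have hx3 := cube a ha
  have hy3 := cube b hb
  have hc : y * x = x * y := by
    have h : redThree (F a) * redThree (F b) = redThree (F b) * redThree (F a) := by
      simp only [← map_mul, hab]
    rw [hx, hy] at h
    have : (x + 1) * (y + 1) - (y + 1) * (x + 1) = x * y - y * x := by noncomm_ring
    rw [h, sub_self] at this
    exact (sub_eq_zero.mp this.symm).symm
  have lb := lift b hb hab
  have lab := lift (a * b)
    (by
      have : a * b * (a * b) * (a * b) = (a * a * a) * (b * b * b) := by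
        have hc' : Commute a b := hab
        have := hc'.mul_pow 3
        simpa only [pow_succ, pow_zero, one_mul] using this
      rw [this, ha, hb, one_mul])
    (by rw [mul_assoc, hab])
  have habb : a * (b * b) = (b * b) * a := by
    rw [← mul_assoc, hab, mul_assoc, hab, mul_assoc]
  have labb := lift (a * b * b)
    (by
      have : a * (b * b) * (a * (b * b)) * (a * (b * b))
          = (a * a * a) * ((b * b * b) * (b * b * b)) := by
        have hc' : Commute a (b * b) := habb
        have := hc'.mul_pow 3
        simpa only [pow_succ, pow_zero, one_mul, mul_assoc] using this
      rw [mul_assoc a, this, ha, hb, one_mul, one_mul])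
    (by rw [mul_assoc a b b, mul_assoc a (b * b) a, habb])
  have eab : redThree (F (a * b)) = (x + 1) * (y + 1) := by
    simp only [map_mul, hx, hy]
  have eabb : redThree (F (a * b * b)) = (x + 1) * (y + 1) * (y + 1) := by
    simp only [map_mul, hx, hy]
  rw [eab] at qab lab
  rw [eabb] at qabb labb
  rw [hx] at qa hx3 lb lab labb
  rw [hy] at qb hy3 lb
  simp only [add_sub_cancel_right] at qa hx3 lb lab labb qb hy3
  obtain ⟨β, c, h1, h2⟩ := jordan_matrix x y hx3 qa hc hy3
  have z1 : (x + 1) * (y + 1) - 1 = x + (1 : ZMod 3) • y + β • (x * x) := by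
    rw [← h1]; simp only [one_smul]; noncomm_ring
  have hxyy : x * y * y = 0 := by
    rw [mul_assoc, h2, mul_smul_comm, ← mul_assoc, hx3, smul_zero]
  have z2 : (x + 1) * (y + 1) * (y + 1) - 1
      = x + (2 : ZMod 3) • y + (2 * β + c) • (x * x) := by
    have : (x + 1) * (y + 1) * (y + 1) - 1
      = x + (y + y) + (x * y + x * y) + y * y + x * y * y := by noncomm_ring
    rw [this, hxyy, h1, h2]; module
  obtain ⟨p1, s1⟩ := quad_calc x y β c 1 β hx3 hc h1 h2
  obtain ⟨p2, s2⟩ := quad_calc x y β c 2 (2 * β + c) hx3 hc h1 h2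
  rw [z1, p1, s1] at lab
  rw [z2, p2, s2] at labb
  rw [z1, s1] at qab
  rw [z2, s2] at qabb
  rw [h1, h2] at lb
  rw [h2] at qb
  rcases cases_three β c (fun h => qb (by rw [h, zero_smul]))
    (fun h => qab (by rw [h, zero_smul])) (fun h => qabb (by rw [h, zero_smul])) with
    ⟨e1, e2⟩ | ⟨e1, e2⟩ | ⟨e1, e2⟩
  · exact lb (by rw [e1, zero_smul]) (by rw [e2, one_smul])
  · exact lab (by rw [e1, zero_smul]) (by rw [e2, one_smul])
  · exact labb (by rw [e1, zero_smul]) (by rw [e2, one_smul])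

/-- The product of two transpositions, as an even permutation. -/
def twoSwap (i j k l : Fin 6) (hij : i ≠ j) (hkl : k ≠ l) : alternatingGroup (Fin 6) :=
  ⟨Equiv.swap i j * Equiv.swap k l, by
    rw [Equiv.Perm.mem_alternatingGroup, map_mul, Equiv.Perm.sign_swap hij,
      Equiv.Perm.sign_swap hkl]; rfl⟩

/-- The 3-cycle on the first three letters. -/
def cycA : alternatingGroup (Fin 6) := twoSwap 0 1 1 2 (by decide) (by decide)

/-- The 3-cycle on the last three letters. -/
def cycB : alternatingGroup (Fin 6) := twoSwap 3 4 4 5 (by decide) (by decide)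

/-- Lemma 4.6 (Astill–Parker–Waldecker): `Alt(6)` is not isomorphic to a subgroup of
`GL₄(ℤ/9ℤ)`: there is no injective group homomorphism from `alternatingGroup (Fin 6)`
into `GL₄(ZMod 9)`. -/
theorem alt6_not_subgroup_GL4_Z9 :
    ¬ ∃ f : alternatingGroup (Fin 6) →* Matrix.GeneralLinearGroup (Fin 4) (ZMod 9),
      Function.Injective f := by
  rintro ⟨f, hf⟩
  refine final_aux (matHom f) cycA cycB (by decide) (by decide) (by decide) ?_ ?_ ?_ ?_
  · exact not_quadratic_hom f hf _ (twoSwap 0 1 2 3 (by decide) (by decide))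
      (twoSwap 1 2 0 3 (by decide) (by decide)) (twoSwap 0 2 1 3 (by decide) (by decide))
      (by decide) (by decide) (by decide) (by decide) (by decide) (by decide) (by decide)
      (by decide)
  · exact not_quadratic_hom f hf _ (twoSwap 3 4 5 0 (by decide) (by decide))
      (twoSwap 4 5 3 0 (by decide) (by decide)) (twoSwap 3 5 4 0 (by decide) (by decide))
      (by decide) (by decide) (by decide) (by decide) (by decide) (by decide) (by decide)
      (by decide)
  · exact not_quadratic_hom f hf _ (twoSwap 0 3 1 4 (by decide) (by decide))
      (twoSwap 1 4 2 5 (by decide) (by decide)) (twoSwap 0 3 2 5 (by decide) (by decide))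
      (by decide) (by decide) (by decide) (by decide) (by decide) (by decide) (by decide)
      (by decide)
  · exact not_quadratic_hom f hf _ (twoSwap 0 3 1 5 (by decide) (by decide))
      (twoSwap 1 5 2 4 (by decide) (by decide)) (twoSwap 0 3 2 4 (by decide) (by decide))
      (by decide) (by decide) (by decide) (by decide) (by decide) (by decide) (by decide)
      (by decide)
end

section
/- Let G be a finite group with a normal subgroup R whose cardinality is a power of 7, such that the quotient G ⧸ R is isomorphic to PSL₂(49), the quotient of the special linear group SL₂ over the field with 49 elements (GaloisField 7 2) by its centre. Suppose there is an element g ∈ G of order 5 that acts fixed point freely on R by conjugation, i.e. for every x ∈ R, if g * x * g⁻¹ = x then x = 1. Then R is elementary abelian: R is commutative and x^7 = 1 for every x ∈ R. -/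
instance : Fact (Nat.Prime 7) := ⟨by norm_num⟩

/-- The field with 49 elements, as `F_7[i]`, in a form in which closed terms can be evaluated. -/
abbrev K7 := QuadraticAlgebra (ZMod 7) (-1) 0
/-- `SL_2(49)` in a form in which closed terms can be evaluated. -/
abbrev S7 := Matrix.SpecialLinearGroup (Fin 2) K7

namespace S7

/-- an element of order five -/
def f : S7 := ⟨!![⟨0,0⟩, ⟨6,0⟩; ⟨1,0⟩, ⟨3,2⟩], by decide⟩
/-- `X`, `Y` generate a four-group modulo the centre -/
def X : S7 := ⟨!![⟨1,6⟩, ⟨4,6⟩; ⟨5,0⟩, ⟨6,1⟩], by decide⟩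
/-- `X`, `Y` generate a four-group modulo the centre -/
def Y : S7 := ⟨!![⟨0,1⟩, ⟨1,1⟩; ⟨0,0⟩, ⟨0,6⟩], by decide⟩
/-- an element of order three modulo the centre, normalizing the four-group -/
def y : S7 := ⟨!![⟨4,4⟩, ⟨3,5⟩; ⟨6,6⟩, ⟨2,3⟩], by decide⟩
/-- an involution modulo the centre, normalizing the `Alt(4)` generated by `X` and `y` -/
def t : S7 := ⟨!![⟨0,3⟩, ⟨6,6⟩; ⟨3,4⟩, ⟨0,4⟩], by decide⟩

attribute [irreducible] f X Y y t

/-- The elements of `Alt(4)`. -/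
def A4L : List S7 := [1, y, y * y, X, X * y, X * y * y, y * X, y * X * y, y * X * y * y,
  y * y * X, y * y * X * y, y * y * X * y * y]

/-- The hypotheses on the module. -/
structure Good (A : Type*) [AddCommGroup A] [DistribMulAction S7 A] : Prop where
  neg : ∀ v : A, (-1 : S7) • v = v
  norm : ∀ v : A, v + f • v + f • f • v + f • f • f • v + f • f • f • f • v = 0
  c2 : ∀ v : A, (2 : ℤ) • v = 0 → v = 0
  d15 : ∃ l : ℤ, ∀ v : A, l • (15 : ℤ) • v = v

variable {A : Type*} [AddCommGroup A] [DistribMulAction S7 A]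

theorem Good.rel (hA : Good A) {u w : S7} (h : u = w ∨ u = -w) (v : A) : u • v = w • v := by
  rcases h with rfl | rfl
  · rfl
  · have : (-w) = w * (-1) := by simp
    rw [this, mul_smul, hA.neg]

theorem Good.c15 (hA : Good A) (v : A) (h : (15 : ℤ) • v = 0) : v = 0 := by
  obtain ⟨l, hl⟩ := hA.d15
  rw [← hl v, h, smul_zero]

theorem Good.c3 (hA : Good A) (v : A) (h : (3 : ℤ) • v = 0) : v = 0 := by
  apply hA.c15
  have : (15 : ℤ) • v = (5 : ℤ) • (3 : ℤ) • v := by module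
  rw [this, h, smul_zero]

theorem Good.c5 (hA : Good A) (v : A) (h : (5 : ℤ) • v = 0) : v = 0 := by
  apply hA.c15
  have : (15 : ℤ) • v = (3 : ℤ) • (5 : ℤ) • v := by module
  rw [this, h, smul_zero]

/-- The vectors fixed by `Alt(4)`. -/
def M (A : Type*) [AddCommGroup A] [DistribMulAction S7 A] : AddSubgroup A where
  carrier := {m | X • m = m ∧ y • m = m}
  add_mem' := by rintro a b ⟨h1, h2⟩ ⟨h3, h4⟩; exact ⟨by rw [smul_add, h1, h3], by rw [smul_add, h2, h4]⟩
  zero_mem' := ⟨smul_zero _, smul_zero _⟩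
  neg_mem' := by rintro a ⟨h1, h2⟩; exact ⟨by rw [smul_neg, h1], by rw [smul_neg, h2]⟩

theorem M.fix (m : M A) (w : S7) (hw : w ∈ A4L) : w • (m : A) = m := by
  have h1 : X • (m : A) = m := m.2.1
  have h2 : y • (m : A) = m := m.2.2
  simp only [A4L, List.mem_cons, List.not_mem_nil, or_false] at hw
  rcases hw with h|h|h|h|h|h|h|h|h|h|h|h <;> subst h <;> simp only [mul_smul, one_smul, h1, h2]

/-- the translates under powers of `f` -/
def q (k : Fin 5) (m : A) : A := f ^ (k : ℕ) • m

theorem q_zero (m : A) : q 0 m = m := by simp [q]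
theorem q_add (k : Fin 5) (m n : A) : q k (m + n) = q k m + q k n := smul_add _ _ _
theorem q_sub (k : Fin 5) (m n : A) : q k (m - n) = q k m - q k n := smul_sub _ _ _
theorem q_neg (k : Fin 5) (m : A) : q k (-m) = - q k m := smul_neg _ _
theorem q_z (k : Fin 5) : q k (0 : A) = 0 := smul_zero _
theorem q_zsmul (k : Fin 5) (m : A) (n : ℤ) : q k (n • m) = n • q k m := smul_comm _ _ _

theorem f_q (k : Fin 5) (m : A) : f • q k m = q (k + 1) m := by
  have h : ∀ k : Fin 5, f * f ^ (k : ℕ) = f ^ ((k + 1 : Fin 5) : ℕ) := by decide +kernel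
  rw [q, q, ← mul_smul, h]

theorem fi_q (k : Fin 5) (m : A) : f⁻¹ • q k m = q (k + 4) m := by
  have h : ∀ k : Fin 5, f⁻¹ * f ^ (k : ℕ) = f ^ ((k + 4 : Fin 5) : ℕ) := by decide +kernel
  rw [q, q, ← mul_smul, h]

theorem Good.sum_q (hA : Good A) (m : A) : q 0 m + q 1 m + q 2 m + q 3 m + q 4 m = 0 := by
  have := hA.norm m
  nth_rw 1 2 3 4 5 [← q_zero m] at this
  simpa only [f_q, Fin.reduceAdd, zero_add] using this

theorem Good.tbl (hA : Good A) {u : S7} {i j : Fin 5}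
    (h : ∃ w ∈ A4L, u * f ^ (i : ℕ) = f ^ (j : ℕ) * w ∨ u * f ^ (i : ℕ) = - (f ^ (j : ℕ) * w))
    (m : M A) : u • q i (m : A) = q j (m : A) := by
  obtain ⟨w, hw, h⟩ := h
  rw [q, q, ← mul_smul, hA.rel h, mul_smul, M.fix m w hw]

theorem Good.tblX (hA : Good A) (k : Fin 5) (m : M A) :
    X • q k (m : A) = q ((![0, 2, 1, 4, 3] : Fin 5 → Fin 5) k) (m : A) := by
  apply hA.tbl
  revert k; decide +kernel

theorem Good.tblY (hA : Good A) (k : Fin 5) (m : M A) :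
    Y • q k (m : A) = q ((![0, 3, 4, 1, 2] : Fin 5 → Fin 5) k) (m : A) := by
  apply hA.tbl
  revert k; decide +kernel

theorem Good.tblZ (hA : Good A) (k : Fin 5) (m : M A) :
    (X * Y) • q k (m : A) = q ((![0, 4, 3, 2, 1] : Fin 5 → Fin 5) k) (m : A) := by
  apply hA.tbl
  revert k; decide +kernel

theorem Good.ind5 (hA : Good A) (x0 x1 x2 x3 x4 : M A)
    (h : q 0 (x0 : A) + q 1 (x1 : A) + q 2 (x2 : A) + q 3 (x3 : A) + q 4 (x4 : A) = 0) :
    (5 : ℤ) • (x0 : A) = x0 + x1 + x2 + x3 + x4 := by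
  have hX := congrArg (X • ·) h
  have hY := congrArg (Y • ·) h
  have hZ := congrArg ((X * Y) • ·) h
  simp only [smul_add, smul_zero, hA.tblX, hA.tblY, hA.tblZ] at hX hY hZ
  have s1 := hA.sum_q (x1 : A)
  have s2 := hA.sum_q (x2 : A)
  have s3 := hA.sum_q (x3 : A)
  have s4 := hA.sum_q (x4 : A)
  simp only [Matrix.cons_val, q_zero] at *
  linear_combination (norm := module) h + hX + hY + hZ - s1 - s2 - s3 - s4

theorem Good.ind (hA : Good A) (x0 x1 x2 x3 x4 : M A)
    (h : q 0 (x0 : A) + q 1 (x1 : A) + q 2 (x2 : A) + q 3 (x3 : A) + q 4 (x4 : A) = 0) :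
    (x0 : A) = x1 ∧ (x0 : A) = x2 ∧ (x0 : A) = x3 ∧ (x0 : A) = x4 := by
  have h0 := hA.ind5 _ _ _ _ _ h
  have key : ∀ z : A, (5 : ℤ) • z = x0 + x1 + x2 + x3 + x4 → (x0 : A) = z := by
    intro z hz
    have := hA.c5 (x0 - z) (by rw [smul_sub, h0, hz, sub_self])
    exact sub_eq_zero.mp this
  have h1 := congrArg (f⁻¹ • ·) h
  have h2 := congrArg (f⁻¹ • f⁻¹ • ·) h
  have h3 := congrArg (f⁻¹ • f⁻¹ • f⁻¹ • ·) h
  have h4 := congrArg (f • ·) h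
  simp only [smul_add, smul_zero, fi_q, f_q, Fin.reduceAdd] at h1 h2 h3 h4
  refine ⟨key _ ?_, key _ ?_, key _ ?_, key _ ?_⟩
  · rw [hA.ind5 x1 x2 x3 x4 x0 (by rw [← h1]; abel)]; abel
  · rw [hA.ind5 x2 x3 x4 x0 x1 (by rw [← h2]; abel)]; abel
  · rw [hA.ind5 x3 x4 x0 x1 x2 (by rw [← h3]; abel)]; abel
  · rw [hA.ind5 x4 x0 x1 x2 x3 (by rw [← h4]; abel)]; abel

/-- coset representatives for the subgroup of order three -/
def at20 (k : Fin 20) : S7 := f ^ ((k : ℕ) % 5) * (![1, X, Y, X * Y] : Fin 4 → S7) ⟨(k : ℕ) / 5, by omega⟩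

/-- coset representatives for the four-group -/
def at15 (k : Fin 15) : S7 := f ^ ((k : ℕ) % 5) * (![1, y, y * y] : Fin 3 → S7) ⟨(k : ℕ) / 5, by omega⟩

theorem Good.c3fix (hA : Good A) (x : A) (hx : y • x = x) :
    ∃ α β : M A, x = q 0 (α : A) + q 2 (β : A) := by
  obtain ⟨l, hl⟩ := hA.d15
  have fixL : ∀ w ∈ [1, y, y * y], w • x = x := by
    intro w hw
    simp only [List.mem_cons, List.not_mem_nil, or_false] at hw
    rcases hw with h | h | h <;> subst h <;> simp only [mul_smul, one_smul, hx]
  set a : Fin 20 → A := fun k => at20 k • x with ha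
  have tb : ∀ (u : S7) (i j : Fin 20),
      (∃ w ∈ [1, y, y * y], u * at20 i = at20 j * w ∨ u * at20 i = - (at20 j * w)) →
      u • a i = a j := by
    rintro u i j ⟨w, hw, h⟩
    simp only [ha]
    rw [← mul_smul, hA.rel h, mul_smul, fixL w hw]
  have hf : ∀ k, f • a k = a ((![1, 2, 3, 4, 0, 6, 7, 8, 9, 5, 11, 12, 13, 14, 10, 16, 17, 18, 19, 15] : Fin 20 → Fin 20) k) := by
    intro k; apply tb; revert k; decide +kernel
  have hX : ∀ k, X • a k = a ((![5, 2, 1, 9, 13, 0, 12, 16, 14, 3, 15, 17, 6, 4, 8, 10, 7, 11, 19, 18] : Fin 20 → Fin 20) k) := by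
    intro k; apply tb; revert k; decide +kernel
  have hy : ∀ k, y • a k = a ((![0, 8, 12, 9, 1, 15, 13, 2, 4, 11, 5, 3, 7, 19, 16, 10, 18, 17, 14, 6] : Fin 20 → Fin 20) k) := by
    intro k; apply tb; revert k; decide +kernel
  have hx0 : a 0 = x := by
    have : at20 0 = 1 := by decide +kernel
    simp only [ha, this, one_smul]
  clear_value a
  have b0 := hA.norm (a 0)
  have b1 := hA.norm (a 5)
  have b2 := hA.norm (a 10)
  have b3 := hA.norm (a 15)
  simp only [hf, Matrix.cons_val] at b0 b1 b2 b3
  have x0 := congrArg (X • ·) b0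
  have x1 := congrArg (X • ·) b1
  have x2 := congrArg (X • ·) b2
  have y0 := congrArg (y • ·) b0
  have y1 := congrArg (y • ·) b1
  have y2 := congrArg (y • ·) b2
  have yy0 := congrArg (y • y • ·) b0
  simp only [smul_add, smul_zero, hX, hy, Matrix.cons_val] at x0 x1 x2 y0 y1 y2 yy0
  let α : A := (3 : ℤ) • (a 0 + a 5 + a 10 + a 15) - (a 1 + a 2 + a 4 + a 6 + a 7 + a 8
    + a 12 + a 13 + a 14 + a 16 + a 18 + a 19)
  let β : A := (3 : ℤ) • (a 3 + a 9 + a 11 + a 17) - (a 1 + a 2 + a 4 + a 6 + a 7 + a 8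
    + a 12 + a 13 + a 14 + a 16 + a 18 + a 19)
  have hα : α ∈ M A := by
    constructor
    · simp only [α, smul_add, smul_sub, smul_comm _ (3 : ℤ), hX, Matrix.cons_val]; abel
    · simp only [α, smul_add, smul_sub, smul_comm _ (3 : ℤ), hy, Matrix.cons_val]; abel
  have hβ : β ∈ M A := by
    constructor
    · simp only [β, smul_add, smul_sub, smul_comm _ (3 : ℤ), hX, Matrix.cons_val]; abel
    · simp only [β, smul_add, smul_sub, smul_comm _ (3 : ℤ), hy, Matrix.cons_val]; abel
  have key : (15 : ℤ) • x = α + q 2 β := by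
    have e : q 2 β = f • f • β := by
      rw [← mul_smul, ← pow_two]; rfl
    rw [e, ← hx0]
    simp only [α, β, smul_add, smul_sub, smul_comm _ (3 : ℤ), hf, Matrix.cons_val]
    linear_combination (norm := module) b0 - (2 : ℤ) • b2 + (2 : ℤ) • b3 + (2 : ℤ) • x0 + (4 : ℤ) • x1
      - (2 : ℤ) • x2 - y0 - (2 : ℤ) • y1 - (4 : ℤ) • y2 + (5 : ℤ) • yy0
  refine ⟨l • ⟨α, hα⟩, l • ⟨β, hβ⟩, ?_⟩
  rw [← hl x, key]
  simp only [AddSubgroup.coe_zsmul, q_zsmul, q_zero, smul_add]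

theorem Good.efix (hA : Good A) (x : A) (hx : X • x = x) (hx' : Y • x = x) : x ∈ M A := by
  refine ⟨hx, ?_⟩
  have fixL : ∀ w ∈ [1, X, Y, X * Y], w • x = x := by
    intro w hw
    simp only [List.mem_cons, List.not_mem_nil, or_false] at hw
    rcases hw with h | h | h | h <;> subst h <;> simp only [mul_smul, one_smul, hx, hx']
  set a : Fin 15 → A := fun k => at15 k • x with ha
  have tb : ∀ (u : S7) (i j : Fin 15),
      (∃ w ∈ [1, X, Y, X * Y], u * at15 i = at15 j * w ∨ u * at15 i = - (at15 j * w)) →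
      u • a i = a j := by
    rintro u i j ⟨w, hw, h⟩
    simp only [ha]
    rw [← mul_smul, hA.rel h, mul_smul, fixL w hw]
  have hf : ∀ k, f • a k = a ((![1, 2, 3, 4, 0, 6, 7, 8, 9, 5, 11, 12, 13, 14, 10] : Fin 15 → Fin 15) k) := by
    intro k; apply tb; revert k; decide +kernel
  have hX : ∀ k, X • a k = a ((![0, 12, 6, 9, 13, 5, 2, 11, 14, 3, 10, 7, 1, 4, 8] : Fin 15 → Fin 15) k) := by
    intro k; apply tb; revert k; decide +kernel
  have hy : ∀ k, y • a k = a ((![5, 8, 12, 4, 11, 10, 13, 2, 9, 1, 0, 3, 7, 14, 6] : Fin 15 → Fin 15) k) := by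
    intro k; apply tb; revert k; decide +kernel
  have hx0 : a 0 = x := by
    have : at15 0 = 1 := by decide +kernel
    simp only [ha, this, one_smul]
  clear_value a
  have b0 := hA.norm (a 0)
  have b1 := hA.norm (a 5)
  have b2 := hA.norm (a 10)
  simp only [hf, Matrix.cons_val] at b0 b1 b2
  have x1 := congrArg (X • ·) b1
  have y0 := congrArg (y • ·) b0
  have y1 := congrArg (y • ·) b1
  have yx0 := congrArg (y • X • ·) b0
  have yx1 := congrArg (y • X • ·) b1
  simp only [smul_add, smul_zero, hX, hy, Matrix.cons_val] at x1 y0 y1 yx0 yx1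
  rw [← hx0, hy, eq_comm, ← sub_eq_zero]
  apply hA.c2
  simp only [Matrix.cons_val]
  linear_combination (norm := module) (2 : ℤ) • b0 + b1 + (2 : ℤ) • b2 - x1 - y0 - y1 - yx0 - yx1

theorem Good.tt (hA : Good A) (v : A) : t • t • v = v := by
  have h : t * t = 1 ∨ t * t = -1 := by decide +kernel
  rw [← mul_smul, hA.rel h, one_smul]

theorem Good.tform (hA : Good A) (m : M A) : ∃ α β : M A,
    t • q 0 (m : A) = q 0 (β : A) - (4 : ℤ) • q 0 (α : A) ∧
    t • q 1 (m : A) = q 0 (α : A) + q 3 (β : A) ∧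
    t • q 2 (m : A) = q 0 (α : A) + q 2 (β : A) ∧
    t • q 3 (m : A) = q 0 (α : A) + q 1 (β : A) ∧
    t • q 4 (m : A) = q 0 (α : A) + q 4 (β : A) := by
  have h2 : y • t • q 2 (m : A) = t • q 2 (m : A) := by
    have h : ∃ w ∈ A4L, y * t * f ^ 2 = t * f ^ 2 * w ∨ y * t * f ^ 2 = - (t * f ^ 2 * w) := by
      decide +kernel
    obtain ⟨w, hw, h⟩ := h
    have e : q 2 (m : A) = f ^ 2 • (m : A) := rfl
    rw [e, ← mul_smul, ← mul_smul, hA.rel h, mul_smul, M.fix m w hw,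
      mul_smul]
  obtain ⟨α, β, hαβ⟩ := hA.c3fix _ h2
  have gen : ∀ (u : S7) (k : Fin 5), (∃ w ∈ A4L, t * f ^ (k : ℕ) = u * t * f ^ 2 * w ∨
      t * f ^ (k : ℕ) = -(u * t * f ^ 2 * w)) → t • q k (m : A) = u • (q 0 (α : A) + q 2 (β : A)) := by
    rintro u k ⟨w, hw, h⟩
    have e : q 2 (m : A) = f ^ 2 • (m : A) := rfl
    rw [← hαβ, e]
    rw [q, ← mul_smul, hA.rel h, mul_smul, M.fix m w hw]
    simp only [mul_smul]
  have h1 : t • q 1 (m : A) = q 0 (α : A) + q 3 (β : A) := by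
    rw [gen (X * Y) 1 (by decide +kernel), smul_add, hA.tblZ, hA.tblZ]; rfl
  have h3 : t • q 3 (m : A) = q 0 (α : A) + q 1 (β : A) := by
    rw [gen X 3 (by decide +kernel), smul_add, hA.tblX, hA.tblX]; rfl
  have h4 : t • q 4 (m : A) = q 0 (α : A) + q 4 (β : A) := by
    rw [gen Y 4 (by decide +kernel), smul_add, hA.tblY, hA.tblY]; rfl
  refine ⟨α, β, ?_, h1, hαβ, h3, h4⟩
  have s1 := congrArg (t • ·) (hA.sum_q (m : A))
  have s2 := hA.sum_q (β : A)
  simp only [smul_add, smul_zero, h1, hαβ, h3, h4] at s1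
  generalize t • q 0 (m : A) = z at s1 ⊢
  linear_combination (norm := module) s1 - s2

theorem Good.main (hA : Good A) (m : M A) :
    (7 : ℤ) • (m : A) = 0 ∧ t • q 0 (m : A) = q 0 (m : A) ∧
    (2 : ℤ) • t • q 2 (m : A) = - (2 : ℤ) • q 2 (m : A) - q 0 (m : A) := by
  choose r s t0 t1 t2 t3 t4 using hA.tform
  -- consequences of `t` being an involution
  have inv : ∀ m : M A, s (s m) = m ∧ s (r m) - (4 : ℤ) • r (r m) + r (s m) = 0 := by
    intro m
    have h := hA.tt (q 2 (m : A))
    simp only [smul_add, t2, t0] at h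
    obtain ⟨h1, h2, h3, h4⟩ := hA.ind (s (r m) - (4 : ℤ) • r (r m) + r (s m)) 0 (s (s m) - m) 0 0 (by
      push_cast
      simp only [q_add, q_sub, q_zsmul, q_z]
      linear_combination (norm := module) h)
    have e1 : s (r m) - (4 : ℤ) • r (r m) + r (s m) = 0 := Subtype.ext h1
    refine ⟨?_, e1⟩
    rw [h1] at h2
    exact (sub_eq_zero.mp (Subtype.ext h2.symm))
  have rneg : ∀ m : M A, r (-m) = - r m := by
    intro m
    have h := t2 (-m)
    push_cast at h
    rw [q_neg, smul_neg, t2] at h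
    obtain ⟨h1, h2, h3, h4⟩ := hA.ind (r (-m) + r m) 0 (s (-m) + s m) 0 0 (by
      push_cast
      simp only [q_add, q_z]
      linear_combination (norm := module) -h)
    exact eq_neg_of_add_eq_zero_left (Subtype.ext h1)
  have ss : ∀ m, s (s m) = m := fun m => (inv m).1
  have rel : ∀ m : M A, (s m : A) = - m ∧
      (r m - r (r m) - r (s m) + r (r (r m)) + r (r (s m)) + r (s (r m)) : A) = -m := by
    intro m
    have hr : t * f * t * f * t * f = f⁻¹ * t * f⁻¹ * t * f⁻¹ * t * f⁻¹ * t ∨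
        t * f * t * f * t * f = -(f⁻¹ * t * f⁻¹ * t * f⁻¹ * t * f⁻¹ * t) := by decide +kernel
    have h := hA.rel hr (q 1 (m : A))
    simp only [mul_smul, smul_add, smul_sub, smul_comm _ (4 : ℤ), f_q, fi_q, Fin.reduceAdd,
      t0, t1, t2, t3, t4, ss, zero_add] at h
    obtain ⟨h1, h2, h3, h4⟩ := hA.ind
      (r m - r (r m) - r (s m) + r (r (r m)) + r (r (s m)) + r (s (r m)))
      (-m) (s m)
      (- s (r m) + s (r (r m)) + s (r (s m)) - s (r (r (r m))) - s (r (r (s m))) - s (r (s (r m))))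
      (r m + (3 : ℤ) • r (r m) - r (s m) - s (r m) - r (r (r (r m))) - r (r (r (s m)))
        - r (r (s (r m))) - r (s (r (r m))) - r (s (r (s m)))) (by
      push_cast
      simp only [q_add, q_sub, q_neg, q_zsmul]
      linear_combination (norm := module) h)
    push_cast at h1 h2
    exact ⟨by rw [← h2, h1], h1⟩
  have sm : ∀ m, s m = -m := fun m => Subtype.ext (by push_cast; exact (rel m).1)
  have e1 : ∀ m : M A, (15 : ℤ) • (r m : A) = - (4 : ℤ) • (m : A) ∧
      (2 : ℤ) • (r (r m) : A) = - (r m : A) := by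
    intro m
    have i2 : ∀ m : M A, (2 : ℤ) • (r (r m) : A) = - (r m : A) := by
      intro m
      have h := congrArg (fun z : M A => (z : A)) (inv m).2
      simp only [sm, rneg] at h
      push_cast at h
      rw [← sub_eq_zero]
      apply hA.c2
      linear_combination (norm := module) - h
    have h := (rel m).2
    simp only [sm, rneg] at h
    push_cast at h
    refine ⟨?_, i2 m⟩
    have i3 := i2 (r m)
    linear_combination (norm := module) (4 : ℤ) • h - (2 : ℤ) • i3 + (7 : ℤ) • i2 m
  have e7 : ∀ m : M A, (7 : ℤ) • (r m : A) = 0 := by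
    intro m
    have a1 := (e1 (r m)).1
    have a2 := (e1 m).2
    linear_combination (norm := module) - (2 : ℤ) • a1 + (15 : ℤ) • a2
  have m7 : (7 : ℤ) • (m : A) = 0 := by
    apply hA.c2
    apply hA.c2
    linear_combination (norm := module) (7 : ℤ) • (e1 m).1 - (15 : ℤ) • e7 m
  have rm : (2 : ℤ) • (r m : A) = - m := by
    linear_combination (norm := module) (2 : ℤ) • (e1 m).1 - (4 : ℤ) • e7 m - m7
  refine ⟨m7, ?_, ?_⟩
  · rw [t0, sm]
    push_cast
    simp only [q_zero]
    linear_combination (norm := module) (-2 : ℤ) • rm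
  · rw [t2, sm]
    push_cast
    simp only [q_zero, q_neg]
    linear_combination (norm := module) rm

theorem Good.gen (hA : Good A) (N : AddSubgroup A) (hN : ∀ (k : Fin 5) (m : M A), q k (m : A) ∈ N)
    (x : A) : (4 : ℤ) • x ∈ N := by
  have hy3 : ∀ v : A, y • y • y • v = v := by
    intro v
    have h : y * y * y = 1 ∨ y * y * y = -1 := by decide +kernel
    rw [← mul_smul, ← mul_smul, hA.rel h, one_smul]
  -- vectors fixed by `y`
  have hn : ∀ v : A, (v + y • v + y • y • v) ∈ N ∧ X • (v + y • v + y • y • v) ∈ N ∧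
      Y • (v + y • v + y • y • v) ∈ N ∧ (X * Y) • (v + y • v + y • y • v) ∈ N := by
    intro v
    obtain ⟨α, β, h⟩ := hA.c3fix (v + y • v + y • y • v) (by
      simp only [smul_add, hy3]; abel)
    rw [h]
    simp only [smul_add, hA.tblX, hA.tblY, hA.tblZ]
    exact ⟨N.add_mem (hN _ _) (hN _ _), N.add_mem (hN _ _) (hN _ _),
      N.add_mem (hN _ _) (hN _ _), N.add_mem (hN _ _) (hN _ _)⟩
  have rXX : ∀ v : A, X • X • v = v := by
    intro v
    rw [← mul_smul, hA.rel (w := 1) (by decide +kernel), one_smul]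
  have rYY : ∀ v : A, Y • Y • v = v := by
    intro v
    rw [← mul_smul, hA.rel (w := 1) (by decide +kernel), one_smul]
  have rYX : ∀ v : A, Y • X • v = X • Y • v := by
    intro v
    rw [← mul_smul, ← mul_smul, hA.rel (w := X * Y) (by decide +kernel)]
  have ryX : ∀ v : A, y • X • v = X • Y • y • v := by
    intro v
    simp only [← mul_smul]
    rw [hA.rel (w := X * Y * y) (by decide +kernel), mul_assoc]
  have ryY : ∀ v : A, y • Y • v = X • y • v := by
    intro v
    simp only [← mul_smul]
    rw [hA.rel (w := X * y) (by decide +kernel)]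
  have he : x + X • x + Y • x + X • Y • x ∈ M A := by
    apply hA.efix
    · simp only [smul_add, rXX]; abel
    · simp only [smul_add, rYY, rYX]; abel
  have he' := hN 0 ⟨_, he⟩
  rw [q_zero] at he'
  obtain ⟨a1, a2, a3, a4⟩ := hn x
  obtain ⟨-, b2, -, -⟩ := hn (X • x)
  obtain ⟨-, -, b3, -⟩ := hn (Y • x)
  obtain ⟨-, -, -, b4⟩ := hn (X • Y • x)
  have key := N.add_mem (N.sub_mem (N.add_mem (N.add_mem b2 b3) b4) (N.add_mem (N.add_mem a2 a3) a4)) he'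
  simp only [mul_smul, smul_add, rYX, ryX, ryY, rXX, rYY] at key
  convert key using 1
  generalize X • Y • y • x = z1
  generalize X • Y • y • y • x = z2
  generalize Y • y • y • x = z3
  generalize X • y • y • x = z4
  generalize X • y • x = z5
  generalize Y • y • x = z6
  generalize X • Y • x = z7
  generalize X • x = z8
  generalize Y • x = z9
  generalize y • y • x = z10
  generalize y • x = z11
  module

theorem Good.seven (hA : Good A) (x : A) : (7 : ℤ) • x = 0 := by
  have h := hA.gen (zsmulAddGroupHom (7 : ℤ) : A →+ A).ker (by
    intro k m
    rw [AddMonoidHom.mem_ker, zsmulAddGroupHom_apply, ← q_zsmul, (hA.main m).1, q_z]) x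
  rw [AddMonoidHom.mem_ker, zsmulAddGroupHom_apply] at h
  apply hA.c2
  apply hA.c2
  rw [← h]; module

/-- words moving the pair `(0, 2)` to any other pair -/
def words : List S7 := [1, f, X, Y, f * f, f * X, f * Y, X * Y, y * f, Y * f, f * f * f, f * f * X,
  f * f * Y, f * X * Y, f * y * f, f * Y * f, X * f * Y, X * y * f, y * f * X, y * y * f]

theorem moves : ∀ i j : Fin 5, i ≠ j → ∃ u ∈ words,
    (∃ w ∈ A4L, u * f ^ ((0 : Fin 5) : ℕ) = f ^ (i : ℕ) * w ∨
      u * f ^ ((0 : Fin 5) : ℕ) = - (f ^ (i : ℕ) * w)) ∧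
    (∃ w ∈ A4L, u * f ^ ((2 : Fin 5) : ℕ) = f ^ (j : ℕ) * w ∨
      u * f ^ ((2 : Fin 5) : ℕ) = - (f ^ (j : ℕ) * w)) := by
  decide +kernel

theorem bilin {C : Type*} [AddCommGroup C] [DistribMulAction S7 C] (hA : Good A) (hC : Good C)
    (B : A →+ A →+ C) (hB : ∀ (u : S7) (a b : A), u • B a b = B (u • a) (u • b)) (a b : A) :
    B a b = 0 := by
  have key : ∀ (m n : M A) , B (q 0 (m : A)) (q 0 (n : A)) = 0 ∧ B (q 0 (m : A)) (q 2 (n : A)) = 0 := by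
    intro m n
    obtain ⟨α, β, h2⟩ := hC.c3fix (B (q 0 (m : A)) (q 2 (n : A))) (by
      rw [hB, hA.tbl (j := 0) (by decide +kernel), hA.tbl (j := 2) (by decide +kernel)])
    have hγ : B (q 0 (m : A)) (q 0 (n : A)) ∈ M C :=
      ⟨by rw [hB, hA.tblX, hA.tblX]; rfl,
       by rw [hB, hA.tbl (j := 0) (by decide +kernel), hA.tbl (j := 0) (by decide +kernel)]⟩
    obtain ⟨γ, h0⟩ : ∃ γ : M C, B (q 0 (m : A)) (q 0 (n : A)) = q 0 (γ : C) :=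
      ⟨⟨_, hγ⟩, by rw [q_zero (A := C)]⟩
    -- an element of `Alt(5)` acting as `(0 i ...)`
    have tr : ∀ (u : S7) (i j : Fin 5),
        (∃ w ∈ A4L, u * f ^ ((0 : Fin 5) : ℕ) = f ^ (i : ℕ) * w ∨
          u * f ^ ((0 : Fin 5) : ℕ) = - (f ^ (i : ℕ) * w)) →
        (∃ w ∈ A4L, u * f ^ ((2 : Fin 5) : ℕ) = f ^ (j : ℕ) * w ∨
          u * f ^ ((2 : Fin 5) : ℕ) = - (f ^ (j : ℕ) * w)) →
        B (q i (m : A)) (q j (n : A)) = q i (α : C) + q j (β : C) := by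
      intro u i j hi hj
      rw [← hA.tbl hi, ← hA.tbl hj, ← hB, h2, smul_add, hC.tbl hi, hC.tbl hj]
    have p01 := tr X 0 1 (by decide +kernel) (by decide +kernel)
    have p03 := tr (X * Y) 0 3 (by decide +kernel) (by decide +kernel)
    have p04 := tr Y 0 4 (by decide +kernel) (by decide +kernel)
    have p20 := tr (X * f * Y) 2 0 (by decide +kernel) (by decide +kernel)
    have p10 := tr (f * Y) 1 0 (by decide +kernel) (by decide +kernel)
    have p30 := tr (f * f * f) 3 0 (by decide +kernel) (by decide +kernel)
    have p40 := tr (f * y * f) 4 0 (by decide +kernel) (by decide +kernel)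
    have s1 : B (q 0 (m : A)) (q 0 (n : A) + q 1 (n : A) + q 2 (n : A) + q 3 (n : A) + q 4 (n : A)) = 0 := by
      rw [hA.sum_q, map_zero]
    have s2 : B (q 0 (m : A) + q 1 (m : A) + q 2 (m : A) + q 3 (m : A) + q 4 (m : A)) (q 0 (n : A)) = 0 := by
      rw [hA.sum_q, map_zero, AddMonoidHom.zero_apply]
    simp only [map_add, AddMonoidHom.add_apply, h0, h2, p01, p03, p04, p20, p10, p30, p40] at s1 s2
    have sα := hC.sum_q (α : C)
    have sβ := hC.sum_q (β : C)
    simp only [q_zero (A := C)] at s1 s2 sα sβ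
    have hαβ : (α : C) = β := by
      rw [← sub_eq_zero]
      apply hC.c5
      linear_combination (norm := module) s1 - sβ - s2 + sα
    have hγα : (γ : C) = - (3 : ℤ) • (α : C) := by
      linear_combination (norm := module) s1 - sβ - hαβ
    -- now use `t`
    have h22 : B (q 2 (m : A)) (q 2 (n : A)) = q 2 (γ : C) := by
      have e : ∀ z : M A, f • f • q 0 (z : A) = q 2 (z : A) := fun z => by
        simp only [f_q, Fin.reduceAdd, zero_add]
      rw [← e, ← e, ← hB, ← hB, h0]
      simp only [f_q, Fin.reduceAdd, zero_add]
    have ht := hB t (q 2 (m : A)) (q 2 (n : A))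
    rw [h22, hγα] at ht
    have k1 := (hA.main m).2.2
    have k2 := (hA.main n).2.2
    have k3 := (hC.main α).2.2
    have ht4 : B ((2 : ℤ) • t • q 2 (m : A)) ((2 : ℤ) • t • q 2 (n : A)) =
        - (6 : ℤ) • ((2 : ℤ) • t • q 2 (α : C)) := by
      rw [map_zsmul, map_zsmul, AddMonoidHom.zsmul_apply, ← ht, q_zsmul, smul_comm t]
      generalize t • q 2 (α : C) = z
      module
    rw [k1, k2, k3] at ht4
    simp only [map_sub, map_zsmul, AddMonoidHom.sub_apply, AddMonoidHom.zsmul_apply, h22, h2, p20, h0,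
      ← hαβ, hγα, q_zsmul] at ht4
    obtain ⟨i1, i2, -, -⟩ := hC.ind (-(5 : ℤ) • α) 0 (-(20 : ℤ) • α) 0 0 (by
      push_cast
      simp only [q_zsmul, q_z]
      linear_combination (norm := module) ht4)
    have hα : (α : C) = 0 := by
      apply hC.c5
      push_cast at i1
      rw [neg_smul, neg_eq_zero] at i1
      exact i1
    rw [h0, h2, ← hαβ, hγα, hα]
    simp [q_z]
  have key2 : ∀ (i j : Fin 5) (m n : M A), B (q i (m : A)) (q j (n : A)) = 0 := by
    intro i j m n
    by_cases hij : i = j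
    · subst hij
      have h := hB (f ^ (i : ℕ)) (m : A) (n : A)
      rw [← q_zero (m : A), ← q_zero (n : A), (key m n).1, smul_zero] at h
      simp only [q_zero] at h
      exact h.symm
    · obtain ⟨u, -, hi, hj⟩ := moves i j hij
      rw [← hA.tbl hi, ← hA.tbl hj, ← hB, (key m n).2, smul_zero]
  have g1 : ∀ (i : Fin 5) (m : M A), B (q i (m : A)) = 0 := by
    intro i m
    ext b
    have h := hA.gen (B (q i (m : A))).ker (fun j n => key2 i j m n) b
    rw [AddMonoidHom.mem_ker, map_zsmul] at h
    apply hC.c2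
    apply hC.c2
    rw [← h]; module
  have h := hA.gen B.ker g1 a
  rw [AddMonoidHom.mem_ker, map_zsmul] at h
  have h' : (4 : ℤ) • B a b = 0 := by
    rw [← AddMonoidHom.zsmul_apply, h, AddMonoidHom.zero_apply]
  apply hC.c2
  apply hC.c2
  rw [← h']; module

open Matrix in
theorem exists_hom_of_trace {F : Type*} [Field F] (ψ : K7 →+* F) 
    (C : Matrix.SpecialLinearGroup (Fin 2) F)
    (hC : C ∉ Subgroup.center (Matrix.SpecialLinearGroup (Fin 2) F))
    (htr : C.1 0 0 + C.1 1 1 = ψ ⟨3, 2⟩) :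
    ∃ θ : S7 →* Matrix.SpecialLinearGroup (Fin 2) F, θ (-1) = -1 ∧ θ f = C := by
  have hdet : C.1 0 0 * C.1 1 1 - C.1 0 1 * C.1 1 0 = 1 := by
    rw [← Matrix.det_fin_two]; exact C.2
  obtain ⟨P, hP, hCP⟩ : ∃ P : Matrix (Fin 2) (Fin 2) F, P.det ≠ 0 ∧
      P * !![0, -1; 1, ψ ⟨3, 2⟩] = C.1 * P := by
    have gen : ∀ v w : F, (v * (C.1 1 0 * v + C.1 1 1 * w) - w * (C.1 0 0 * v + C.1 0 1 * w) ≠ 0) →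
        ∃ P : Matrix (Fin 2) (Fin 2) F, P.det ≠ 0 ∧
          P * !![0, -1; 1, ψ ⟨3, 2⟩] = C.1 * P := by
      intro v w h
      refine ⟨!![v, C.1 0 0 * v + C.1 0 1 * w; w, C.1 1 0 * v + C.1 1 1 * w], ?_, ?_⟩
      · rw [Matrix.det_fin_two_of]
        intro h'
        apply h
        linear_combination h'
      · rw [← htr]
        ext i j
        fin_cases i <;> fin_cases j <;> simp [Matrix.mul_apply, Fin.sum_univ_two]
        · linear_combination v * hdet
        · linear_combination w * hdet
    by_contra hno
    have h1 : C.1 1 0 = 0 := by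
      by_contra h; exact hno (gen 1 0 (by simpa using h))
    have h2 : C.1 0 1 = 0 := by
      by_contra h; exact hno (gen 0 1 (by simpa using h))
    have h3 : C.1 1 1 - C.1 0 0 = 0 := by
      by_contra h; exact hno (gen 1 1 (by rw [h1, h2]; simpa using h))
    apply hC
    rw [Matrix.SpecialLinearGroup.mem_center_iff]
    refine ⟨C.1 0 0, ?_, ?_⟩
    · rw [Fintype.card_fin]
      linear_combination hdet + C.1 0 1 * h1 - C.1 0 0 * h3
    · ext i j
      have h3' := sub_eq_zero.mp h3
      fin_cases i <;> fin_cases j <;> simp [h1, h2, h3']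
  have hu : IsUnit P.det := isUnit_iff_ne_zero.mpr hP
  let θ : S7 →* Matrix.SpecialLinearGroup (Fin 2) F :=
    { toFun := fun u => ⟨P * (Matrix.SpecialLinearGroup.map ψ u).1 * P⁻¹, by
        rw [Matrix.det_mul, Matrix.det_mul, (Matrix.SpecialLinearGroup.map ψ u).2, mul_one,
          ← Matrix.det_mul, Matrix.mul_nonsing_inv _ hu, Matrix.det_one]⟩
      map_one' := by
        apply Subtype.ext
        simp only [map_one, Matrix.SpecialLinearGroup.coe_one, mul_one, Matrix.mul_nonsing_inv _ hu]
      map_mul' := fun u w => by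
        apply Subtype.ext
        simp only [map_mul, Matrix.SpecialLinearGroup.coe_mul]
        calc _ = P * (Matrix.SpecialLinearGroup.map ψ u).1 * 1 *
              (Matrix.SpecialLinearGroup.map ψ w).1 * P⁻¹ := by simp only [mul_one, mul_assoc]
          _ = P * (Matrix.SpecialLinearGroup.map ψ u).1 * (P⁻¹ * P) *
              (Matrix.SpecialLinearGroup.map ψ w).1 * P⁻¹ := by rw [Matrix.nonsing_inv_mul _ hu]
          _ = (P * (Matrix.SpecialLinearGroup.map ψ u).1 * P⁻¹) *
              (P * (Matrix.SpecialLinearGroup.map ψ w).1 * P⁻¹) := by simp only [mul_assoc] }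
  refine ⟨θ, ?_, ?_⟩
  · apply Subtype.ext
    have : (Matrix.SpecialLinearGroup.map ψ (-1 : S7)).1 = -1 := by
      ext i j
      fin_cases i <;> fin_cases j <;> simp
    change P * (Matrix.SpecialLinearGroup.map ψ (-1 : S7)).1 * P⁻¹ = _
    rw [this]
    simp [Matrix.mul_nonsing_inv _ hu]
  · apply Subtype.ext
    have h00 : f.1 0 0 = 0 := by decide +kernel
    have h01 : f.1 0 1 = -1 := by decide +kernel
    have h10 : f.1 1 0 = 1 := by decide +kernel
    have h11 : f.1 1 1 = ⟨3, 2⟩ := by decide +kernel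
    have : (Matrix.SpecialLinearGroup.map ψ f).1 = !![0, -1; 1, ψ ⟨3, 2⟩] := by
      ext i j
      fin_cases i <;> fin_cases j <;>
        simp [Matrix.SpecialLinearGroup.map_apply_coe, h00, h01, h10, h11]
    change P * (Matrix.SpecialLinearGroup.map ψ f).1 * P⁻¹ = _
    rw [this, hCP, mul_assoc, Matrix.mul_nonsing_inv _ hu, mul_one]

theorem exists_hom_five {F : Type*} [Field F] (ψ : K7 →+* F)
    (B : Matrix.SpecialLinearGroup (Fin 2) F)
    (hB : B ∉ Subgroup.center (Matrix.SpecialLinearGroup (Fin 2) F)) (h5 : B ^ 5 = 1) :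
    ∃ θ : S7 →* Matrix.SpecialLinearGroup (Fin 2) F, θ (-1) = -1 ∧ (θ f = B ∨ θ f = B ^ 2) := by
  set a := B.1 0 0 with ha
  set b := B.1 0 1 with hb
  set c := B.1 1 0 with hc
  set d := B.1 1 1 with hd
  have hdet : a * d - b * c = 1 := by
    rw [ha, hb, hc, hd, ← Matrix.det_fin_two]; exact B.2
  have hBm : B.1 = !![a, b; c, d] := Matrix.eta_fin_two B.1
  have hbc : b * c = a * d - 1 := by linear_combination -hdet
  set s := a + d with hs
  have h2 : B.1 * B.1 = s • B.1 - 1 := by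
    rw [hBm, Matrix.mul_fin_two, Matrix.one_fin_two]
    ext i j
    fin_cases i <;> fin_cases j <;> simp <;> rw [hs]
    · linear_combination hbc
    · ring
    · ring
    · linear_combination hbc
  set p := s ^ 4 - 3 * s ^ 2 + 1 with hp
  have h5m : p • B.1 - (s ^ 3 - 2 * s) • (1 : Matrix (Fin 2) (Fin 2) F) = 1 := by
    have h5' := congrArg Subtype.val h5
    rw [Matrix.SpecialLinearGroup.coe_pow, Matrix.SpecialLinearGroup.coe_one] at h5'
    have h3 : B.1 * (B.1 * B.1) = (s ^ 2 - 1) • B.1 - s • 1 := by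
      rw [h2, mul_sub, mul_one, Matrix.mul_smul, h2]; module
    have h4 : B.1 * (B.1 * (B.1 * B.1)) = (s ^ 3 - 2 * s) • B.1 - (s ^ 2 - 1) • 1 := by
      rw [h3, mul_sub, Matrix.mul_smul, Matrix.mul_smul, mul_one, h2]; module
    refine Eq.trans ?_ h5'
    rw [show B.1 ^ 5 = B.1 * (B.1 * (B.1 * (B.1 * B.1))) by noncomm_ring, h4, mul_sub,
      Matrix.mul_smul, Matrix.mul_smul, mul_one, h2, hp]
    module
  rw [hBm, Matrix.one_fin_two] at h5m
  have e00 := congrFun (congrFun h5m 0) 0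
  have e01 := congrFun (congrFun h5m 0) 1
  have e10 := congrFun (congrFun h5m 1) 0
  have e11 := congrFun (congrFun h5m 1) 1
  simp [-mul_eq_zero] at e00 e01 e10 e11
  have p3 : p * (a - d) = 0 := by linear_combination e00 - e11
  have hp0 : p = 0 := by
    by_contra hne
    have b0 : b = 0 := (mul_eq_zero.mp e01).resolve_left hne
    have c0 : c = 0 := (mul_eq_zero.mp e10).resolve_left hne
    have d0 : a - d = 0 := (mul_eq_zero.mp p3).resolve_left hne
    apply hB
    rw [Matrix.SpecialLinearGroup.mem_center_iff]
    refine ⟨a, ?_, ?_⟩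
    · rw [Fintype.card_fin]
      linear_combination hdet + c * b0 + a * d0
    · rw [hBm, b0, c0, ← sub_eq_zero.mp d0]
      ext i j
      fin_cases i <;> fin_cases j <;> simp
  have hq : s ^ 2 + s - 1 = 0 := by
    rw [hp0, zero_mul] at e00
    rw [hp] at hp0
    linear_combination (-1) * hp0 - s * e00
  have hτ : ψ ⟨3, 2⟩ ^ 2 + ψ ⟨3, 2⟩ - 1 = 0 := by
    rw [← map_pow, ← map_add, ← map_one ψ, ← map_sub, ← map_zero ψ]
    congr 1
  have hfac : (s - ψ ⟨3, 2⟩) * (s + 1 + ψ ⟨3, 2⟩) = 0 := by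
    linear_combination hq - hτ
  rcases mul_eq_zero.mp hfac with h | h
  · obtain ⟨θ, h1, h2⟩ := exists_hom_of_trace ψ B hB (sub_eq_zero.mp h)
    exact ⟨θ, h1, Or.inl h2⟩
  · obtain ⟨θ, h1, h2⟩ := exists_hom_of_trace ψ (B ^ 2) (by
      intro hz
      apply hB
      have : B = ((B ^ 2) ^ 2)⁻¹ := by
        rw [eq_inv_iff_mul_eq_one, ← h5]; group
      rw [this]
      exact inv_mem (pow_mem hz 2)) (by
      rw [Matrix.SpecialLinearGroup.coe_pow, pow_two, h2]
      simp only [Matrix.sub_apply, Matrix.smul_apply, Matrix.one_apply_eq, smul_eq_mul, ← ha, ← hd]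
      linear_combination hq - h - s * hs)
    exact ⟨θ, h1, Or.inr h2⟩

theorem exists_field_hom : Nonempty (K7 →+* GaloisField 7 2) := by
  have : Fintype (GaloisField 7 2) := Fintype.ofFinite _
  have hc : Fintype.card (GaloisField 7 2) = 49 := by
    rw [← Nat.card_eq_fintype_card, GaloisField.card 7 2 (by norm_num)]
    norm_num
  obtain ⟨i, hi⟩ := (FiniteField.isSquare_neg_one_iff (F := GaloisField 7 2)).mpr (by rw [hc]; norm_num)
  exact ⟨(QuadraticAlgebra.lift (R := ZMod 7) (a := -1) (b := 0) ⟨i, by rw [← hi]; simp⟩).toRingHom⟩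

theorem exists_hom {F : Type*} [Field F] (ψ : K7 →+* F)
    (B : Matrix.SpecialLinearGroup (Fin 2) F)
    (hB : B ∉ Subgroup.center (Matrix.SpecialLinearGroup (Fin 2) F))
    (h5 : B ^ 5 ∈ Subgroup.center (Matrix.SpecialLinearGroup (Fin 2) F)) :
    ∃ θ : S7 →* (Matrix.SpecialLinearGroup (Fin 2) F ⧸ Subgroup.center (Matrix.SpecialLinearGroup (Fin 2) F)),
      θ (-1) = 1 ∧ (θ f = QuotientGroup.mk B ∨ θ f = QuotientGroup.mk B ^ 2) := by
  have hneg : (-1 : Matrix.SpecialLinearGroup (Fin 2) F) ∈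
      Subgroup.center (Matrix.SpecialLinearGroup (Fin 2) F) := by
    rw [Subgroup.mem_center_iff]; intro g; simp
  obtain ⟨z, hz, hz5⟩ : ∃ z ∈ Subgroup.center (Matrix.SpecialLinearGroup (Fin 2) F),
      (B * z) ^ 5 = 1 := by
    obtain ⟨r, hr, hr'⟩ := Matrix.SpecialLinearGroup.mem_center_iff.mp h5
    rw [Fintype.card_fin, sq_eq_one_iff] at hr
    rcases hr with rfl | rfl
    · refine ⟨1, one_mem _, ?_⟩
      rw [mul_one]; apply Subtype.ext; rw [← hr']; simp
    · refine ⟨-1, hneg, ?_⟩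
      rw [mul_neg, mul_one, Odd.neg_pow (by decide), neg_eq_iff_eq_neg]
      apply Subtype.ext; rw [← hr', map_neg, map_one]; simp
  have hq : (QuotientGroup.mk (B * z) : (Matrix.SpecialLinearGroup (Fin 2) F ⧸
      Subgroup.center (Matrix.SpecialLinearGroup (Fin 2) F))) = QuotientGroup.mk B := by
    rw [eq_comm, QuotientGroup.eq]; simpa using hz
  obtain ⟨θ, h1, h2⟩ := exists_hom_five ψ (B * z) (by
    intro h
    exact hB (by simpa using mul_mem h (inv_mem hz))) hz5
  refine ⟨(QuotientGroup.mk' _).comp θ, ?_, ?_⟩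
  · rw [MonoidHom.comp_apply, h1]
    exact (QuotientGroup.eq_one_iff _).mpr hneg
  · rw [MonoidHom.comp_apply, QuotientGroup.mk'_apply]
    rcases h2 with h | h <;> rw [h]
    · left; exact hq
    · right; rw [QuotientGroup.mk_pow, hq]

theorem exists_theta {G : Type*} [Group G] (R : Subgroup G) [R.Normal]
    (e : (G ⧸ R) ≃* (Matrix.SpecialLinearGroup (Fin 2) (GaloisField 7 2) ⧸
        Subgroup.center (Matrix.SpecialLinearGroup (Fin 2) (GaloisField 7 2))))
    (g : G) (hg : orderOf g = 5) (hfpf : ∀ x ∈ R, g * x * g⁻¹ = x → x = 1) :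
    ∃ (θ : S7 →* G ⧸ R) (h : G), θ (-1) = 1 ∧ θ f = QuotientGroup.mk h ∧ h ^ 5 = 1 ∧
      ∀ x ∈ R, h * x * h⁻¹ = x → x = 1 := by
  have hg5 : g ^ 5 = 1 := by rw [← hg]; exact pow_orderOf_eq_one g
  obtain ⟨ψ⟩ := exists_field_hom
  obtain ⟨B, hB⟩ := QuotientGroup.mk_surjective (e (QuotientGroup.mk g))
  obtain ⟨θ, h1, h2⟩ := exists_hom ψ B (by
    intro h
    rw [(QuotientGroup.eq_one_iff _).mpr h] at hB
    have := (map_eq_one_iff e e.injective).mp hB.symm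
    have hg1 := hfpf g ((QuotientGroup.eq_one_iff _).mp this) (by group)
    rw [hg1, orderOf_one] at hg
    omega) (by
    rw [← QuotientGroup.eq_one_iff, QuotientGroup.mk_pow, hB, ← map_pow, ← QuotientGroup.mk_pow,
      hg5, QuotientGroup.mk_one, map_one])
  refine ⟨e.symm.toMonoidHom.comp θ, ?_⟩
  rcases h2 with h2 | h2
  · refine ⟨g, ?_, ?_, hg5, hfpf⟩
    · simp [h1]
    · simp [h2, hB]
  · refine ⟨g ^ 2, ?_, ?_, ?_, ?_⟩
    · simp [h1]
    · simp [h2, hB]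
    · rw [← pow_mul, mul_comm, pow_mul, hg5, one_pow]
    · intro x hx h
      apply hfpf x hx
      have hc : Commute (g ^ 2) x := by
        rw [mul_inv_eq_iff_eq_mul] at h; exact h
      have : g = (g ^ 2) ^ 3 := by rw [← pow_mul, pow_succ, hg5, one_mul]
      have hc' : Commute g x := by rw [this]; exact hc.pow_left 3
      rw [hc'.eq, mul_inv_cancel_right]

/-- The additive form of an action by automorphisms. -/
@[reducible] def act {Q : Type*} [CommGroup Q] (σ : S7 →* MulAut Q) :
    DistribMulAction S7 (Additive Q) where
  smul u v := Additive.ofMul (σ u v.toMul)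
  one_smul v := by change Additive.ofMul (σ 1 v.toMul) = v; rw [map_one]; rfl
  mul_smul u w v := by
    change Additive.ofMul (σ (u * w) v.toMul) = Additive.ofMul (σ u (σ w v.toMul))
    rw [map_mul]; rfl
  smul_zero u := by
    change Additive.ofMul (σ u 1) = 0
    rw [map_one]; rfl
  smul_add u v w := by
    change Additive.ofMul (σ u (v.toMul * w.toMul)) = _
    rw [map_mul]; rfl

theorem act_smul {Q : Type*} [CommGroup Q] (σ : S7 →* MulAut Q) (u : S7) (v : Additive Q) :
    letI := act σ
    u • v = Additive.ofMul (σ u v.toMul) := rfl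

theorem good_act {Q : Type*} [CommGroup Q] (hp : ∃ n : ℕ, Nat.card Q = 7 ^ n)
    (σ : S7 →* MulAut Q) (h1 : σ (-1) = 1) (hf : ∀ x, σ f x = x → x = 1) :
    letI := act σ
    Good (Additive Q) := by
  let _ := act σ
  obtain ⟨n, hn⟩ := hp
  have hcard : ∀ v : Additive Q, ((7 ^ n : ℕ) : ℤ) • v = 0 := by
    intro v
    have : v.toMul ^ (7 ^ n) = 1 := by rw [← hn]; exact pow_card_eq_one'
    rw [natCast_zsmul]
    exact congrArg Additive.ofMul this
  have inv : ∀ k : ℕ, Nat.Coprime k (7 ^ n) → ∃ l : ℤ, ∀ v : Additive Q, l • (k : ℤ) • v = v := by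
    intro k hk
    have hb := Nat.gcd_eq_gcd_ab k (7 ^ n)
    rw [Nat.coprime_iff_gcd_eq_one.mp hk] at hb
    refine ⟨Nat.gcdA k (7 ^ n), fun v => ?_⟩
    calc (Nat.gcdA k (7 ^ n)) • (k : ℤ) • v
        = (Nat.gcdA k (7 ^ n)) • (k : ℤ) • v + (Nat.gcdB k (7 ^ n)) • ((7 ^ n : ℕ) : ℤ) • v := by
          rw [hcard, smul_zero, add_zero]
      _ = ((k : ℤ) * Nat.gcdA k (7 ^ n) + ((7 ^ n : ℕ) : ℤ) * Nat.gcdB k (7 ^ n)) • v := by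
          rw [smul_smul, smul_smul, ← add_smul, mul_comm, mul_comm (Nat.gcdB _ _)]
      _ = v := by rw [← hb]; simp
  refine ⟨?_, ?_, ?_, ?_⟩
  · intro v
    rw [act_smul, h1]; rfl
  · intro v
    have h5 : f * f * f * f * f = 1 := by decide +kernel
    have h5v : f • f • f • f • f • v = v := by
      simp only [← mul_smul, ← mul_assoc]; rw [h5, one_smul]
    have := hf (v + f • v + f • f • v + f • f • f • v + f • f • f • f • v).toMul (by
      have : f • (v + f • v + f • f • v + f • f • f • v + f • f • f • f • v) =
          v + f • v + f • f • v + f • f • f • v + f • f • f • f • v := by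
        simp only [smul_add, h5v]; abel
      exact congrArg Additive.toMul this)
    exact congrArg Additive.ofMul this
  · intro v hv
    obtain ⟨l, hl⟩ := inv 2 (Nat.Coprime.pow_right _ (by norm_num))
    rw [← hl v]
    rw [Nat.cast_ofNat, hv, smul_zero]
  · exact inv 15 (Nat.Coprime.pow_right _ (by norm_num))

theorem bilin_group {A C : Type*} [Group A] [Group C] (hA : ∀ a b : A, a * b = b * a)
    (hC : ∀ a b : C, a * b = b * a)
    (hpA : ∃ n : ℕ, Nat.card A = 7 ^ n) (hpC : ∃ n : ℕ, Nat.card C = 7 ^ n)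
    (σ : S7 →* MulAut A) (h1 : σ (-1) = 1) (hf : ∀ x, σ f x = x → x = 1)
    (σ' : S7 →* MulAut C) (h1' : σ' (-1) = 1) (hf' : ∀ x, σ' f x = x → x = 1)
    (B : A → A → C) (hl : ∀ a a' b, B (a * a') b = B a b * B a' b)
    (hr : ∀ a b b', B a (b * b') = B a b * B a b')
    (hB : ∀ u a b, σ' u (B a b) = B (σ u a) (σ u b)) (a b : A) : B a b = 1 := by
  let _ : CommGroup A := { (inferInstance : Group A) with mul_comm := hA }
  let _ : CommGroup C := { (inferInstance : Group C) with mul_comm := hC }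
  let _ := act σ
  let _ := act σ'
  let B' : Additive A →+ Additive A →+ Additive C :=
    AddMonoidHom.mk' (fun a => AddMonoidHom.mk' (fun b => Additive.ofMul (B a.toMul b.toMul))
      (fun b b' => congrArg Additive.ofMul (hr _ _ _)))
      (fun a a' => by
        ext b
        exact congrArg Additive.ofMul (hl _ _ _))
  have := bilin (good_act hpA σ h1 hf) (good_act hpC σ' h1' hf') B'
    (fun u a b => congrArg Additive.ofMul (hB u a.toMul b.toMul)) (Additive.ofMul a) (Additive.ofMul b)
  exact congrArg Additive.toMul this

theorem seven_group {A : Type*} [Group A] (hA : ∀ a b : A, a * b = b * a)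
    (hpA : ∃ n : ℕ, Nat.card A = 7 ^ n)
    (σ : S7 →* MulAut A) (h1 : σ (-1) = 1) (hf : ∀ x, σ f x = x → x = 1) (a : A) : a ^ 7 = 1 := by
  let _ : CommGroup A := { (inferInstance : Group A) with mul_comm := hA }
  let _ := act σ
  have := (good_act hpA σ h1 hf).seven (Additive.ofMul a)
  have h' : (7 : ℕ) • (Additive.ofMul a) = 0 := by rw [← this]; module
  exact congrArg Additive.toMul h'

section induct

open scoped commutatorElement

variable {G : Type*} [Group G] (K : Subgroup G) [K.Normal] (θ : S7 →* G ⧸ K) (h : G)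

theorem exists_sigma (h1 : θ (-1) = 1) (hf : θ f = QuotientGroup.mk h) {Q : Type*} [Group Q]
    (ρ : G →* MulAut Q) (hK : ∀ k ∈ K, ρ k = 1) :
    ∃ σ : S7 →* MulAut Q, σ (-1) = 1 ∧ σ f = ρ h ∧ ∀ u, ∃ g, σ u = ρ g ∧ θ u = QuotientGroup.mk g := by
  refine ⟨(QuotientGroup.lift K ρ hK).comp θ, ?_, ?_, ?_⟩
  · rw [MonoidHom.comp_apply, h1, map_one]
  · rw [MonoidHom.comp_apply, hf]; rfl
  · intro u
    obtain ⟨g, hg⟩ := QuotientGroup.mk_surjective (θ u)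
    refine ⟨g, ?_, hg.symm⟩
    rw [MonoidHom.comp_apply, ← hg]; rfl

theorem comm_center {Q : Type*} [Group Q] (x y z w : Q) (hz : z ∈ Subgroup.center Q)
    (hw : w ∈ Subgroup.center Q) : ⁅x * z, y * w⁆ = ⁅x, y⁆ := by
  rw [Subgroup.mem_center_iff] at hz hw
  rw [commutatorElement_def, commutatorElement_def, mul_inv_rev, mul_inv_rev]
  calc x * z * (y * w) * (z⁻¹ * x⁻¹) * (w⁻¹ * y⁻¹)
      = x * (z * (y * w)) * z⁻¹ * x⁻¹ * w⁻¹ * y⁻¹ := by group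
    _ = x * y * (w * x⁻¹) * w⁻¹ * y⁻¹ := by rw [← hz (y * w)]; group
    _ = x * y * x⁻¹ * y⁻¹ := by rw [← hw x⁻¹]; group

theorem abelian_aux (h1 : θ (-1) = 1) (hf : θ f = QuotientGroup.mk h) (N : ℕ) :
    ∀ (Q : Type*) [Group Q] [Finite Q], Nat.card Q ≤ N → (∃ n : ℕ, Nat.card Q = 7 ^ n) →
    ∀ ρ : G →* MulAut Q, (∀ k ∈ K, ∃ c : Q, ∀ x, ρ k x = c * x * c⁻¹) →
    (∀ x, ρ h x = x → x = 1) → ∀ x y : Q, x * y = y * x := by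
  induction N with
  | zero =>
    intro Q _ _ hN
    have := Nat.card_pos (α := Q)
    omega
  | succ N ih =>
    intro Q _ _ hN hp ρ hK hfp
    obtain ⟨n, hn⟩ := hp
    by_cases htriv : Subsingleton Q
    · intro x y; exact Subsingleton.elim _ _
    have hnt : Nontrivial Q := not_subsingleton_iff_nontrivial.mp htriv
    have hpg : IsPGroup 7 Q := IsPGroup.of_card hn
    have hprime : Fact (Nat.Prime 7) := ⟨by norm_num⟩
    have hZnt : Nontrivial (Subgroup.center Q) := hpg.center_nontrivial
    obtain ⟨nA, hnA⟩ := (IsPGroup.iff_card).mp (hpg.to_quotient (Subgroup.center Q))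
    obtain ⟨nC, hnC⟩ := (IsPGroup.iff_card).mp (hpg.to_subgroup (Subgroup.center Q))
    -- actions
    have hmap : ∀ g, (Subgroup.center Q).map (ρ g).toMonoidHom = Subgroup.center Q := fun g =>
      Subgroup.characteristic_iff_map_eq.mp inferInstance (ρ g)
    let ρA : G →* MulAut (Q ⧸ Subgroup.center Q) :=
      { toFun := fun g => QuotientGroup.congr _ _ (ρ g) (hmap g)
        map_one' := by
          ext a
          obtain ⟨x, rfl⟩ := QuotientGroup.mk_surjective a
          change (QuotientGroup.mk (ρ 1 x) : Q ⧸ Subgroup.center Q) = QuotientGroup.mk x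
          rw [map_one]; rfl
        map_mul' := fun g g' => by
          ext a
          obtain ⟨x, rfl⟩ := QuotientGroup.mk_surjective a
          change (QuotientGroup.mk (ρ (g * g') x) : Q ⧸ Subgroup.center Q) =
            QuotientGroup.mk (ρ g (ρ g' x))
          rw [map_mul]; rfl }
    have ρA_mk : ∀ g x, ρA g (QuotientGroup.mk x) = QuotientGroup.mk (ρ g x) := fun g x => rfl
    let ρC : G →* MulAut (Subgroup.center Q) :=
      { toFun := fun g => Subgroup.centerCongr (ρ g)
        map_one' := by ext a; rw [map_one]; rfl
        map_mul' := fun g g' => by ext a; rw [map_mul]; rfl }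
    have ρC_mk : ∀ g x, ((ρC g x : Subgroup.center Q) : Q) = ρ g x := fun g x => rfl
    have hKA : ∀ k ∈ K, ∃ c : Q ⧸ Subgroup.center Q, ∀ x, ρA k x = c * x * c⁻¹ := by
      intro k hk
      obtain ⟨c, hc⟩ := hK k hk
      refine ⟨QuotientGroup.mk c, fun a => ?_⟩
      obtain ⟨x, rfl⟩ := QuotientGroup.mk_surjective a
      rw [ρA_mk, hc]; rfl
    have hfpC : ∀ x, ρC h x = x → x = 1 := by
      intro x hx
      apply Subtype.ext
      exact hfp x (by rw [← ρC_mk, hx])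
    have hfpA : ∀ x, ρA h x = x → x = 1 := by
      have inj : Function.Injective (fun x : Q => x⁻¹ * ρ h x) := by
        intro x y hxy
        simp only at hxy
        have : ρ h (y * x⁻¹) = y * x⁻¹ := by
          rw [map_mul, map_inv, mul_inv_eq_iff_eq_mul, mul_assoc, hxy]; group
        have := hfp _ this
        exact (mul_inv_eq_one.mp this).symm
      have surj := Finite.surjective_of_injective inj
      have surjA : Function.Surjective (fun x : Q ⧸ Subgroup.center Q => x⁻¹ * ρA h x) := by
        intro a
        obtain ⟨x, rfl⟩ := QuotientGroup.mk_surjective a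
        obtain ⟨z, hz⟩ := surj x
        refine ⟨QuotientGroup.mk z, ?_⟩
        simp only at hz ⊢
        rw [ρA_mk, ← hz]; rfl
      have injA := Finite.injective_iff_surjective.mpr surjA
      intro x hx
      apply injA
      simp [hx]
    have hlt : Nat.card (Q ⧸ Subgroup.center Q) ≤ N := by
      have hmul := Subgroup.card_eq_card_quotient_mul_card_subgroup (Subgroup.center Q)
      have h2 : 1 < Nat.card (Subgroup.center Q) := Finite.one_lt_card
      have h3 := Nat.card_pos (α := Q ⧸ Subgroup.center Q)
      nlinarith
    have hcA := ih (Q ⧸ Subgroup.center Q) hlt ⟨nA, hnA⟩ ρA hKA hfpA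
    have hKA1 : ∀ k ∈ K, ρA k = 1 := by
      intro k hk
      obtain ⟨c, hc⟩ := hKA k hk
      ext a
      rw [hc, hcA c a, mul_inv_cancel_right]; rfl
    have hKC1 : ∀ k ∈ K, ρC k = 1 := by
      intro k hk
      obtain ⟨c, hc⟩ := hK k hk
      ext a
      rw [ρC_mk, hc, Subgroup.mem_center_iff.mp a.2 c, mul_inv_cancel_right]; rfl
    obtain ⟨σA, a1, a2, a3⟩ := exists_sigma K θ h h1 hf ρA hKA1
    have hz : ∀ x y : Q, ⁅x, y⁆ ∈ Subgroup.center Q := by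
      intro x y
      rw [← QuotientGroup.eq_one_iff]
      have := hcA (QuotientGroup.mk x) (QuotientGroup.mk y)
      rw [commutatorElement_def]
      change (QuotientGroup.mk x * QuotientGroup.mk y * (QuotientGroup.mk x)⁻¹ *
        (QuotientGroup.mk y)⁻¹ : Q ⧸ Subgroup.center Q) = 1
      rw [this]; group
    obtain ⟨σC, c1, c2, c3⟩ := exists_sigma K θ h h1 hf ρC hKC1
    let B : (Q ⧸ Subgroup.center Q) → (Q ⧸ Subgroup.center Q) → Subgroup.center Q :=
      fun a b => ⟨⁅a.out, b.out⁆, hz _ _⟩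
    have B_mk : ∀ x y : Q, ((B (QuotientGroup.mk x) (QuotientGroup.mk y) : Subgroup.center Q) : Q) = ⁅x, y⁆ := by
      intro x y
      obtain ⟨z, hz⟩ := QuotientGroup.mk_out_eq_mul (Subgroup.center Q) x
      obtain ⟨w, hw⟩ := QuotientGroup.mk_out_eq_mul (Subgroup.center Q) y
      change ⁅(QuotientGroup.mk x : Q ⧸ Subgroup.center Q).out,
        (QuotientGroup.mk y : Q ⧸ Subgroup.center Q).out⁆ = _
      rw [hz, hw, comm_center x y z w z.2 w.2]
    have hKey := bilin_group hcA (fun a b => Subtype.ext (Subgroup.mem_center_iff.mp b.2 a)) ⟨nA, hnA⟩ ⟨nC, hnC⟩ σA a1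
      (by rw [a2]; exact hfpA) σC c1 (by rw [c2]; exact hfpC) B ?_ ?_ ?_
    · intro x y
      have := B_mk x y
      rw [hKey] at this
      exact commutatorElement_eq_one_iff_mul_comm.mp this.symm
    · intro a a' b
      obtain ⟨x, rfl⟩ := QuotientGroup.mk_surjective a
      obtain ⟨x', rfl⟩ := QuotientGroup.mk_surjective a'
      obtain ⟨y, rfl⟩ := QuotientGroup.mk_surjective b
      apply Subtype.ext
      rw [← QuotientGroup.mk_mul, B_mk, Subgroup.coe_mul, B_mk, B_mk]
      have e := Subgroup.mem_center_iff.mp (hz x' y) x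
      calc ⁅x * x', y⁆ = x * ⁅x', y⁆ * x⁻¹ * ⁅x, y⁆ := by simp only [commutatorElement_def]; group
        _ = ⁅x', y⁆ * ⁅x, y⁆ := by rw [e, mul_inv_cancel_right]
        _ = _ := (Subgroup.mem_center_iff.mp (hz x' y) _).symm
    · intro a b b'
      obtain ⟨x, rfl⟩ := QuotientGroup.mk_surjective a
      obtain ⟨y, rfl⟩ := QuotientGroup.mk_surjective b
      obtain ⟨y', rfl⟩ := QuotientGroup.mk_surjective b'
      apply Subtype.ext
      rw [← QuotientGroup.mk_mul, B_mk, Subgroup.coe_mul, B_mk, B_mk]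
      have e := Subgroup.mem_center_iff.mp (hz x y') y
      calc ⁅x, y * y'⁆ = ⁅x, y⁆ * (y * ⁅x, y'⁆) * y⁻¹ := by simp only [commutatorElement_def]; group
        _ = ⁅x, y⁆ * ⁅x, y'⁆ := by rw [e]; group
    · intro u a b
      obtain ⟨x, rfl⟩ := QuotientGroup.mk_surjective a
      obtain ⟨y, rfl⟩ := QuotientGroup.mk_surjective b
      obtain ⟨g, hg, hgu⟩ := a3 u
      obtain ⟨g', hg', hgu'⟩ := c3 u
      have : ρC g' = ρC g := by
        rw [hgu'] at hgu
        have hm := hKC1 _ (QuotientGroup.eq.mp hgu)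
        rw [map_mul, map_inv, inv_mul_eq_one] at hm
        exact hm
      rw [hg, hg', this, ρA_mk, ρA_mk]
      apply Subtype.ext
      rw [ρC_mk, B_mk, B_mk, map_commutatorElement]

end induct

end S7


/-- Lemma 4.5 (Astill–Parker–Waldecker): if `G` is a finite group with a normal
`7`-subgroup `R` such that `G ⧸ R ≅ PSL₂(49)`, and some element of order `5` of `G` acts
fixed point freely on `R` by conjugation, then `R` is elementary abelian. -/
theorem elementary_abelian_of_psl_two_49_quotient
    (G : Type*) [Group G] [Finite G]
    (R : Subgroup G) (hRnormal : R.Normal)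
    (hRcard : ∃ k : ℕ, Nat.card R = 7 ^ k)
    (hquot : Nonempty ((G ⧸ R) ≃*
      (Matrix.SpecialLinearGroup (Fin 2) (GaloisField 7 2) ⧸
        Subgroup.center (Matrix.SpecialLinearGroup (Fin 2) (GaloisField 7 2)))))
    (g : G) (hg : orderOf g = 5)
    (hfpf : ∀ x ∈ R, g * x * g⁻¹ = x → x = 1) :
    (∀ x ∈ R, ∀ y ∈ R, x * y = y * x) ∧ (∀ x ∈ R, x ^ 7 = 1) := by
  obtain ⟨e⟩ := hquot
  obtain ⟨θ, h, h1, hf, -, hfp⟩ := S7.exists_theta R e g hg hfpf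
  let ρ : G →* MulAut R := MulAut.conjNormal
  have hρ : ∀ (g : G) (x : R), ((ρ g x : R) : G) = g * x * g⁻¹ := fun g x =>
    MulAut.conjNormal_apply g x
  have hfpR : ∀ x : R, ρ h x = x → x = 1 := by
    intro x hx
    apply Subtype.ext
    exact hfp x x.2 (by rw [← hρ, hx])
  have hcomm := S7.abelian_aux R θ h h1 hf (Nat.card R) R le_rfl hRcard ρ (by
    intro k hk
    exact ⟨⟨k, hk⟩, fun x => Subtype.ext (hρ k x)⟩) hfpR
  have hK : ∀ k ∈ R, ρ k = 1 := by
    intro k hk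
    ext x
    have := congrArg Subtype.val (hcomm ⟨k, hk⟩ x)
    simp only [Subgroup.coe_mul] at this
    rw [hρ, this, mul_inv_cancel_right]; rfl
  obtain ⟨σ, s1, s2, -⟩ := S7.exists_sigma R θ h h1 hf ρ hK
  refine ⟨fun x hx y hy => congrArg Subtype.val (hcomm ⟨x, hx⟩ ⟨y, hy⟩), fun x hx => ?_⟩
  exact congrArg Subtype.val
    (S7.seven_group hcomm hRcard σ s1 (by rw [s2]; exact hfpR) (⟨x, hx⟩ : R))
end
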